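/- arXiv:0804.2012 — 9 statements merged into one kernel-verified Lean document; each statement's English description precedes it below -/
import Mathlib

section
/- Let R be a commutative local ring with maximal ideal m, and let A be an R-algebra that is finitely generated as an R-module. If e is an idempotent of A whose image in the quotient algebra A/mA is central, then e is central in A. -/
/-! The inner derivation `D = ⁅e, ·⁆` of an idempotent `e` satisfies `D³ = D`, so `D` maps its
range onto itself. If moreover `D` takes values in `I • A`, then `range D = D (range D)` is
contained in `D (I • A) = I • range D`, and Nakayama's lemma gives `D = 0`. -/

theorem eq_zero_of_range_le_map_range_of_range_le_smul_top {R M : Type*} [CommRing R]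
    [AddCommGroup M] [Module R M] [Module.Finite R M] {I : Ideal R}
    (hI : I ≤ (⊥ : Ideal R).jacobson) {f : M →ₗ[R] M}
    (hf : LinearMap.range f ≤ (LinearMap.range f).map f)
    (hIf : LinearMap.range f ≤ I • (⊤ : Submodule R M)) : f = 0 := by
  have range_le_smul_range : LinearMap.range f ≤ I • LinearMap.range f :=
    calc LinearMap.range f ≤ (LinearMap.range f).map f := hf
      _ ≤ (I • (⊤ : Submodule R M)).map f := Submodule.map_mono hIf
      _ = I • LinearMap.range f := by rw [Submodule.map_smul'', LinearMap.range_eq_map]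
  exact LinearMap.range_eq_bot.mp <| Submodule.eq_bot_of_le_smul_of_le_jacobson_bot I _
    (Module.Finite.iff_fg.mp inferInstance) range_le_smul_range hI

section Commutator

attribute [local instance] LieRing.ofAssociativeRing

theorem lie_lie_lie_of_isIdempotentElem {A : Type*} [Ring A] {e : A} (he : IsIdempotentElem e)
    (a : A) : ⁅e, ⁅e, ⁅e, a⁆⁆⁆ = ⁅e, a⁆ := by
  have mul_mul_cancel (x : A) : e * (e * x) = e * x := by rw [← mul_assoc, he.eq]
  simp only [Ring.lie_def, mul_sub, sub_mul, mul_assoc, mul_mul_cancel, he.eq]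
  abel

theorem central_of_central_mod_maximalIdeal_general {R A : Type*} [CommRing R] [Ring A]
    [Algebra R A] [Module.Finite R A] {I : Ideal R} (hI : I ≤ (⊥ : Ideal R).jacobson)
    {e : A} (he : IsIdempotentElem e)
    (hbar : ∀ a : A, e * a - a * e ∈ I • (⊤ : Submodule R A)) (a : A) : e * a = a * e := by
  have range_le_map_range : LinearMap.range (LieAlgebra.ad R A e) ≤
      (LinearMap.range (LieAlgebra.ad R A e)).map (LieAlgebra.ad R A e) := by
    rintro _ ⟨b, rfl⟩
    exact ⟨⁅e, ⁅e, b⁆⁆, ⟨⁅e, b⁆, rfl⟩, lie_lie_lie_of_isIdempotentElem he b⟩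
  have range_le_smul_top : LinearMap.range (LieAlgebra.ad R A e) ≤ I • (⊤ : Submodule R A) := by
    rintro _ ⟨b, rfl⟩
    exact hbar b
  have ad_eq_zero : LieAlgebra.ad R A e = 0 :=
    eq_zero_of_range_le_map_range_of_range_le_smul_top hI range_le_map_range range_le_smul_top
  exact sub_eq_zero.mp (LinearMap.congr_fun ad_eq_zero a)

end Commutator

/-- Let `R` be a commutative local ring with maximal ideal `m`, and let `A` be
an `R`-algebra that is finitely generated as an `R`-module. If `e` is an idempotent of `A`
whose image in the quotient algebra `A/mA` is central (i.e. all its commutators lie in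
`mA = m • A`), then `e` is central in `A`. -/
theorem central_of_central_mod_maximalIdeal
    (R : Type*) [CommRing R] [IsLocalRing R]
    (A : Type*) [Ring A] [Algebra R A] [Module.Finite R A]
    (e : A) (he : IsIdempotentElem e)
    (hbar : ∀ a : A, e * a - a * e ∈ (IsLocalRing.maximalIdeal R) • (⊤ : Submodule R A)) :
    ∀ a : A, e * a = a * e :=
  central_of_central_mod_maximalIdeal_general (IsLocalRing.maximalIdeal_le_jacobson ⊥) he hbar
end

section
/- Let O be a discrete valuation ring with field of fractions F and residue field k, and let A be an O-algebra that is free and finitely generated as an O-module such that the F-algebra F ⊗_O A is split semisimple. Then the reduction map A → k ⊗_O A restricts to a map on centers Z(A) → Z(k ⊗_O A) which induces a bijection from the set of primitive idempotents of Z(A) onto the set of primitive idempotents of Z(k ⊗_O A). -/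
open scoped TensorProduct
set_option synthInstance.maxHeartbeats 1000000
set_option maxHeartbeats 1000000

/-- A block of a ring: a primitive idempotent of the center, i.e. a nonzero central idempotent
which cannot be written as a sum of two nonzero orthogonal central idempotents. -/
def IsBlockIdempotent {A : Type*} [Ring A] (e : A) : Prop :=
  e ∈ Subring.center A ∧ IsIdempotentElem e ∧ e ≠ 0 ∧
    ∀ f g : A, f ∈ Subring.center A → g ∈ Subring.center A →
      IsIdempotentElem f → IsIdempotentElem g → f * g = 0 → e = f + g → f = 0 ∨ g = 0

/-!
Reduction modulo the maximal ideal `𝔪` induces a bijection on central idempotents, hence on the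
minimal nonzero ones. Injectivity is Nakayama's lemma. To lift a central idempotent `e` of `k ⊗ A`,
first lift it to an idempotent of `(O ⧸ 𝔪ⁿ) ⊗ A`. By Nakayama's lemma every such lift is central, so
`e` has lifts to `A` whose commutators lie in `𝔪ⁿ A`, and by Artin–Rees one of these can be
corrected modulo `𝔪 A` to a central element `z`. Splitness makes `z` a root of a product of linear
factors over `O`; separating the factors `X - a` with `a ≡ 1` modulo `𝔪` from the others yields a
polynomial `q` such that `q(z)` is idempotent and still lifts `e`.
-/

section CentralIdempotents

variable {A B : Type*} [Ring A] [Ring B]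

/-- The idempotents of the center of a ring `A`, as a set of elements of `A`. The blocks of `A` are
its minimal nonzero elements. -/
def centralIdempotents (A : Type*) [Ring A] : Set A :=
  {e | e ∈ Subring.center A ∧ IsIdempotentElem e}

theorem mul_mem_centralIdempotents {e f : A} (he : e ∈ centralIdempotents A)
    (hf : f ∈ centralIdempotents A) : e * f ∈ centralIdempotents A :=
  ⟨mul_mem he.1 hf.1, he.2.mul_of_commute (Subring.mem_center_iff.1 hf.1 e) hf.2⟩

theorem one_sub_mem_centralIdempotents {e : A} (he : e ∈ centralIdempotents A) :
    1 - e ∈ centralIdempotents A :=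
  ⟨sub_mem (one_mem _) he.1, he.2.one_sub⟩

theorem isBlockIdempotent_iff {e : A} :
    IsBlockIdempotent e ↔ e ∈ centralIdempotents A ∧ e ≠ 0 ∧
      ∀ f ∈ centralIdempotents A, e * f = 0 ∨ e * f = e := by
  constructor
  · rintro ⟨hec, hei, hne, hprim⟩
    have he : e ∈ centralIdempotents A := ⟨hec, hei⟩
    refine ⟨he, hne, fun f hf => ?_⟩
    have hef := mul_mem_centralIdempotents he hf
    have hef' := mul_mem_centralIdempotents he (one_sub_mem_centralIdempotents hf)
    have horth : e * f * (e * (1 - f)) = 0 := by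
      rw [mul_assoc, ← mul_assoc f, ← Subring.mem_center_iff.1 hf.1 e, mul_assoc e f,
        hf.2.mul_one_sub_self, mul_zero, mul_zero]
    have hsum : e = e * f + e * (1 - f) := by rw [← mul_add, add_sub_cancel, mul_one]
    refine (hprim _ _ hef.1 hef'.1 hef.2 hef'.2 horth hsum).imp_right fun h => ?_
    rwa [mul_sub, mul_one, sub_eq_zero, eq_comm] at h
  · rintro ⟨he, hne, hmin⟩
    refine ⟨he.1, he.2, hne, fun f g hf _ hfi _ hfg hsum => ?_⟩
    have hef : e * f = f := by
      rw [← Subring.mem_center_iff.1 he.1 f, hsum, mul_add, hfi.eq, hfg, add_zero]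
    refine (hmin f ⟨hf, hfi⟩).imp (fun h => hef ▸ h) fun h => ?_
    rwa [← h, hef, left_eq_add] at hsum

theorem map_mem_center_of_surjective {φ : A →+* B} (hφ : Function.Surjective φ) {z : A}
    (hz : z ∈ Subring.center A) : φ z ∈ Subring.center B := by
  refine Subring.mem_center_iff.2 fun b => ?_
  obtain ⟨a, rfl⟩ := hφ b
  rw [← map_mul, Subring.mem_center_iff.1 hz, map_mul]

theorem injOn_centralIdempotents {φ : A →+* B}
    (hφ : ∀ u ∈ centralIdempotents A, φ u = 0 → u = 0) :
    Set.InjOn φ (centralIdempotents A) := by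
  have eq_mul {e f : A} (he : e ∈ centralIdempotents A) (hf : f ∈ centralIdempotents A)
      (h : φ e = φ f) : e = e * f := by
    have hzero : φ (e * (1 - f)) = 0 := by
      rw [map_mul, map_sub, map_one, h, (hf.2.map φ).mul_one_sub_self]
    have hcompl := hφ _ (mul_mem_centralIdempotents he (one_sub_mem_centralIdempotents hf)) hzero
    rwa [mul_sub, mul_one, sub_eq_zero] at hcompl
  intro e he f hf h
  rw [eq_mul he hf h, ← Subring.mem_center_iff.1 he.1 f, ← eq_mul hf he h.symm]

theorem bijOn_isBlockIdempotent {φ : A →+* B}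
    (hφ : Set.BijOn φ (centralIdempotents A) (centralIdempotents B)) :
    Set.BijOn φ {e | IsBlockIdempotent e} {e | IsBlockIdempotent e} := by
  have map_eq_zero {e : A} (he : e ∈ centralIdempotents A) (h : φ e = 0) : e = 0 :=
    hφ.injOn he ⟨zero_mem _, .zero⟩ (h.trans (map_zero φ).symm)
  simp only [isBlockIdempotent_iff]
  refine ⟨?_, hφ.injOn.mono fun e he => he.1, ?_⟩
  · rintro e ⟨he, hne, hmin⟩
    refine ⟨hφ.mapsTo he, fun h => hne (map_eq_zero he h), fun f' hf' => ?_⟩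
    obtain ⟨f, hf, rfl⟩ := hφ.surjOn hf'
    rw [← map_mul]
    exact (hmin f hf).imp (fun h => by rw [h, map_zero]) (congrArg φ)
  · rintro e' ⟨he', hne, hmin⟩
    obtain ⟨e, he, rfl⟩ := hφ.surjOn he'
    refine ⟨e, ⟨he, fun h => hne (by rw [h, map_zero]), fun f hf => ?_⟩, rfl⟩
    have hef := mul_mem_centralIdempotents he hf
    have hmin := hmin (φ f) (hφ.mapsTo hf)
    rw [← map_mul] at hmin
    exact hmin.imp (map_eq_zero hef) (hφ.injOn hef he)

end CentralIdempotents

section Nakayama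

variable {O : Type*} [CommRing O] {I : Ideal O}

theorem eq_zero_of_isIdempotentElem_of_range_le_smul_top {M : Type*} [AddCommGroup M] [Module O M]
    [Module.Finite O M] (hI : I ≤ Ideal.jacobson ⊥) {P : Module.End O M} (hP : IsIdempotentElem P)
    (hrange : LinearMap.range P ≤ I • ⊤) : P = 0 := by
  rw [← LinearMap.range_eq_bot]
  refine Submodule.eq_bot_of_le_smul_of_le_jacobson_bot I _
    (Module.Finite.iff_fg.1 (Module.Finite.range P)) ?_ hI
  calc LinearMap.range P = (LinearMap.range P).map P := by
        rw [← LinearMap.range_comp, ← Module.End.mul_eq_comp, hP.eq]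
    _ ≤ (I • ⊤ : Submodule O M).map P := Submodule.map_mono hrange
    _ = I • LinearMap.range P := by rw [Submodule.map_smul'', Submodule.map_top]

variable {A : Type*} [Ring A] [Algebra O A] [Module.Finite O A]

theorem eq_zero_of_isIdempotentElem_of_mem_smul_top (hI : I ≤ Ideal.jacobson ⊥) {u : A}
    (hu : IsIdempotentElem u) (hmem : u ∈ I • (⊤ : Submodule O A)) : u = 0 := by
  have hP : IsIdempotentElem (LinearMap.mulLeft O u) := by
    rw [IsIdempotentElem, Module.End.mul_eq_comp, ← LinearMap.mulLeft_mul, hu.eq]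
  have hzero := eq_zero_of_isIdempotentElem_of_range_le_smul_top hI hP <| by
    rintro _ ⟨x, rfl⟩
    exact Submodule.smul_top_le_comap_smul_top I (LinearMap.mulRight O x) hmem
  simpa using LinearMap.congr_fun hzero 1

theorem mul_mul_one_sub_eq_zero_of_commutator_mem_smul_top (hI : I ≤ Ideal.jacobson ⊥) {e : A}
    (he : IsIdempotentElem e) (hcomm : ∀ x, e * x - x * e ∈ I • (⊤ : Submodule O A)) (x : A) :
    e * x * (1 - e) = 0 := by
  have hP : IsIdempotentElem (LinearMap.mulLeft O e * LinearMap.mulRight O (1 - e)) := by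
    refine LinearMap.ext fun y => ?_
    simp only [Module.End.mul_apply, LinearMap.mulLeft_apply, LinearMap.mulRight_apply, mul_assoc,
      he.one_sub.eq, he.mul_self_mul]
  have hzero := eq_zero_of_isIdempotentElem_of_range_le_smul_top hI hP <| by
    rintro _ ⟨y, rfl⟩
    have hy := hcomm (y * (1 - e))
    rwa [mul_assoc, he.one_sub_mul_self, mul_zero, sub_zero] at hy
  simpa [mul_assoc] using LinearMap.congr_fun hzero x

theorem mem_center_of_commutator_mem_smul_top (hI : I ≤ Ideal.jacobson ⊥) {e : A}
    (he : IsIdempotentElem e) (hcomm : ∀ x, e * x - x * e ∈ I • (⊤ : Submodule O A)) :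
    e ∈ Subring.center A := by
  refine Subring.mem_center_iff.2 fun x => ?_
  have hcomm' (y : A) : (1 - e) * y - y * (1 - e) ∈ I • (⊤ : Submodule O A) := by
    convert neg_mem (hcomm y) using 1
    noncomm_ring
  have hleft := mul_mul_one_sub_eq_zero_of_commutator_mem_smul_top hI he hcomm x
  have hright := mul_mul_one_sub_eq_zero_of_commutator_mem_smul_top hI he.one_sub hcomm' x
  rw [mul_sub, mul_one, sub_eq_zero] at hleft
  rw [sub_sub_cancel, sub_mul, sub_mul, one_mul, sub_eq_zero] at hright
  rw [hleft, hright]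

end Nakayama

section ArtinRees

variable {O : Type*} [CommRing O] {I : Ideal O}

theorem mem_smul_top_pi {ι M : Type*} [Finite ι] [AddCommGroup M] [Module O M] {f : ι → M}
    (hf : ∀ i, f i ∈ I • (⊤ : Submodule O M)) : f ∈ I • (⊤ : Submodule O (ι → M)) := by
  classical
  have := Fintype.ofFinite ι
  rw [← Finset.univ_sum_single f]
  exact sum_mem fun i _ =>
    Submodule.smul_top_le_comap_smul_top I (LinearMap.single O (fun _ => M) i) (hf i)

variable {A : Type*} [Ring A] [Algebra O A]

theorem mem_center_of_commute_of_span_eq_top {s : Set A} (hs : Submodule.span O s = ⊤) {z : A}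
    (hz : ∀ b ∈ s, Commute z b) : z ∈ Subring.center A := by
  have h : LinearMap.mulRight O z = LinearMap.mulLeft O z :=
    LinearMap.ext_on hs fun b hb => (hz b hb).eq.symm
  exact Subring.mem_center_iff.2 (LinearMap.congr_fun h)

variable (A) in
theorem exists_pow_commutator_mem_imp_exists_sub_mem_center [IsNoetherianRing O]
    [Module.Finite O A] (I : Ideal O) :
    ∃ n ≠ 0, ∀ a : A, (∀ x, a * x - x * a ∈ I ^ n • (⊤ : Submodule O A)) →
      ∃ w ∈ I • (⊤ : Submodule O A), a - w ∈ Subring.center A := by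
  obtain ⟨N, b, hb⟩ := Module.Finite.exists_fin (R := O) (M := A)
  let ad : A →ₗ[O] (Fin N → A) :=
    LinearMap.pi fun i => LinearMap.mulRight O (b i) - LinearMap.mulLeft O (b i)
  obtain ⟨k, hk⟩ := Ideal.exists_pow_inf_eq_pow_smul I (LinearMap.range ad)
  refine ⟨k + 1, k.succ_ne_zero, fun a ha => ?_⟩
  have hmem : ad a ∈ I • LinearMap.range ad := by
    have had : ad a ∈ I ^ (k + 1) • ⊤ ⊓ LinearMap.range ad :=
      ⟨mem_smul_top_pi fun i => ha (b i), a, rfl⟩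
    rw [hk (k + 1) k.le_succ, Nat.add_sub_cancel_left, pow_one] at had
    exact Submodule.smul_mono le_rfl inf_le_right had
  rw [← Submodule.map_top, ← Submodule.map_smul''] at hmem
  obtain ⟨w, hw, hwa⟩ := hmem
  refine ⟨w, hw, mem_center_of_commute_of_span_eq_top hb ?_⟩
  rintro _ ⟨i, rfl⟩
  have had : ad (a - w) = 0 := by rw [map_sub, hwa, sub_self]
  exact sub_eq_zero.1 (congrFun had i)

end ArtinRees

section Reduction

open Algebra.TensorProduct (includeRight)

variable {O A : Type*} [CommRing O] [Ring A] [Algebra O A] {I J : Ideal O}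

theorem includeRight_mem_center {B : Type*} [CommRing B] [Algebra O B] {z : A}
    (hz : z ∈ Subring.center A) : includeRight z ∈ Subring.center (B ⊗[O] A) :=
  Algebra.TensorProduct.includeRight_map_center_le O B A ⟨z, hz, rfl⟩

theorem includeRight_quotient_eq_zero_iff {a : A} :
    (includeRight a : (O ⧸ I) ⊗[O] A) = 0 ↔ a ∈ I • (⊤ : Submodule O A) := by
  rw [← (TensorProduct.quotTensorEquivQuotSMul A I).map_eq_zero_iff,
    Algebra.TensorProduct.includeRight_apply, TensorProduct.quotTensorEquivQuotSMul_mk_one_tmul,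
    Submodule.Quotient.mk_eq_zero]

variable (A) in
/-- The reduction map `(O ⧸ I) ⊗ A → (O ⧸ J) ⊗ A` for ideals `I ≤ J`. -/
noncomputable def quotientTensorFactor (h : I ≤ J) : (O ⧸ I) ⊗[O] A →ₐ[O] (O ⧸ J) ⊗[O] A :=
  Algebra.TensorProduct.map (Ideal.Quotient.factorₐ O h) (AlgHom.id O A)

theorem quotientTensorFactor_includeRight (h : I ≤ J) (a : A) :
    quotientTensorFactor A h (includeRight a) = includeRight a := by
  simp [quotientTensorFactor]

theorem includeRight_quotient_surjective :
    Function.Surjective (includeRight : A →ₐ[O] (O ⧸ I) ⊗[O] A) :=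
  Algebra.TensorProduct.includeRight_surjective A Ideal.Quotient.mk_surjective

theorem mem_smul_top_of_quotientTensorFactor_eq_zero (h : I ≤ J) {x : (O ⧸ I) ⊗[O] A}
    (hx : quotientTensorFactor A h x = 0) : x ∈ J • (⊤ : Submodule O ((O ⧸ I) ⊗[O] A)) := by
  obtain ⟨a, rfl⟩ := includeRight_quotient_surjective x
  rw [quotientTensorFactor_includeRight, includeRight_quotient_eq_zero_iff] at hx
  exact Submodule.smul_top_le_comap_smul_top J includeRight.toLinearMap hx

theorem pow_mem_pow_smul_top {a : A} (ha : a ∈ I • (⊤ : Submodule O A)) (n : ℕ) :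
    a ^ n ∈ I ^ n • (⊤ : Submodule O A) := by
  induction n with
  | zero => simp
  | succ n ih =>
    have hmul : a * a ^ n ∈ (I • ⊤ : Submodule O A).map (LinearMap.mulRight O (a ^ n)) :=
      ⟨a, ha, rfl⟩
    rw [pow_succ', pow_succ', mul_smul]
    rw [Submodule.map_smul''] at hmul
    refine Submodule.smul_mono le_rfl ?_ hmul
    rintro _ ⟨x, -, rfl⟩
    exact Submodule.smul_top_le_comap_smul_top _ (LinearMap.mulLeft O x) ih

theorem isNilpotent_of_quotientTensorFactor_pow_eq_zero {n : ℕ} (hn : n ≠ 0)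
    {x : (O ⧸ I ^ n) ⊗[O] A} (hx : quotientTensorFactor A (Ideal.pow_le_self (I := I) hn) x = 0) :
    IsNilpotent x := by
  obtain ⟨a, rfl⟩ := includeRight_quotient_surjective x
  rw [quotientTensorFactor_includeRight, includeRight_quotient_eq_zero_iff] at hx
  refine ⟨n, ?_⟩
  rw [← map_pow, includeRight_quotient_eq_zero_iff]
  exact pow_mem_pow_smul_top hx n

variable [Module.Finite O A]

theorem exists_mem_centralIdempotents_quotientTensorFactor_eq (hI : I ≤ Ideal.jacobson ⊥) {n : ℕ}
    (hn : n ≠ 0) {e : (O ⧸ I) ⊗[O] A} (he : e ∈ centralIdempotents ((O ⧸ I) ⊗[O] A)) :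
    ∃ e' ∈ centralIdempotents ((O ⧸ I ^ n) ⊗[O] A),
      quotientTensorFactor A (Ideal.pow_le_self (I := I) hn) e' = e := by
  let φ := quotientTensorFactor A (Ideal.pow_le_self (I := I) hn)
  have hrange : e ∈ φ.toRingHom.range := by
    obtain ⟨a, rfl⟩ := includeRight_quotient_surjective e
    exact ⟨includeRight a, quotientTensorFactor_includeRight _ a⟩
  obtain ⟨e', he', rfl⟩ := exists_isIdempotentElem_eq_of_ker_isNilpotent φ.toRingHom
    (fun x hx => isNilpotent_of_quotientTensorFactor_pow_eq_zero hn hx) e hrange he.2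
  have hcomm (x : (O ⧸ I ^ n) ⊗[O] A) : φ (e' * x - x * e') = 0 := by
    rw [map_sub, map_mul, map_mul, sub_eq_zero]
    exact (Subring.mem_center_iff.1 he.1 (φ x)).symm
  exact ⟨e', ⟨mem_center_of_commutator_mem_smul_top hI he' fun x =>
    mem_smul_top_of_quotientTensorFactor_eq_zero _ (hcomm x), he'⟩, rfl⟩

theorem exists_mem_center_includeRight_eq [IsNoetherianRing O] (hI : I ≤ Ideal.jacobson ⊥)
    {e : (O ⧸ I) ⊗[O] A} (he : e ∈ centralIdempotents ((O ⧸ I) ⊗[O] A)) :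
    ∃ z ∈ Subring.center A, includeRight z = e := by
  obtain ⟨n, hn, hcorrect⟩ := exists_pow_commutator_mem_imp_exists_sub_mem_center A I
  obtain ⟨e', he', rfl⟩ := exists_mem_centralIdempotents_quotientTensorFactor_eq hI hn he
  obtain ⟨a, rfl⟩ := includeRight_quotient_surjective e'
  obtain ⟨w, hw, hz⟩ := hcorrect a fun x => by
    rw [← includeRight_quotient_eq_zero_iff, map_sub, map_mul, map_mul, sub_eq_zero]
    exact (Subring.mem_center_iff.1 he'.1 (includeRight x)).symm
  refine ⟨a - w, hz, ?_⟩
  rw [map_sub, includeRight_quotient_eq_zero_iff.2 hw, sub_zero, quotientTensorFactor_includeRight]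

end Reduction

section SplitPolynomials

open Polynomial

theorem isCoprime_multiset_prod {R : Type*} [CommSemiring R] {s t : Multiset R}
    (h : ∀ x ∈ s, ∀ y ∈ t, IsCoprime x y) : IsCoprime s.prod t.prod :=
  Multiset.prod_induction (IsCoprime · t.prod) s (fun _ _ => .mul_left) isCoprime_one_left
    fun x hx => Multiset.prod_induction (IsCoprime x) t (fun _ _ => .mul_right)
      isCoprime_one_right (h x hx)

variable {O : Type*} [CommRing O]

-- The extra factor `X * (X - 1)` gives `g` the root `1` and `h` the root `0` whatever the roots of
-- `f` are; then `u * g + v * h = 1` forces `v * h` to take the value `0` at `0` and `1` at `1`.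
theorem exists_isCoprime_mul_eq_of_splits [IsLocalRing O] {f : O[X]} (hf : f.Monic)
    (hs : f.Splits) :
    ∃ g h : O[X], IsCoprime g h ∧ g * h = X * (X - 1) * f ∧ g.eval 1 = 0 ∧ h.eval 0 = 0 := by
  classical
  obtain ⟨s, hfs⟩ := splits_iff_exists_multiset.1 hs
  rw [hf.leadingCoeff, map_one, one_mul] at hfs
  let t : Multiset O := 0 ::ₘ 1 ::ₘ s
  let near : Multiset O := t.filter fun a => IsLocalRing.residue O a = 1
  let far : Multiset O := t.filter fun a => ¬ IsLocalRing.residue O a = 1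
  refine ⟨(near.map (X - C ·)).prod, (far.map (X - C ·)).prod, ?_, ?_, ?_, ?_⟩
  · refine isCoprime_multiset_prod fun p hp q hq => ?_
    obtain ⟨a, ha, rfl⟩ := Multiset.mem_map.1 hp
    obtain ⟨b, hb, rfl⟩ := Multiset.mem_map.1 hq
    refine isCoprime_X_sub_C_of_isUnit_sub ?_
    rw [← IsLocalRing.residue_ne_zero_iff_isUnit, map_sub, sub_ne_zero,
      (Multiset.mem_filter.1 ha).2]
    exact Ne.symm (Multiset.mem_filter.1 hb).2
  · rw [← Multiset.prod_add, ← Multiset.map_add, Multiset.filter_add_not, hfs]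
    simp [t, mul_assoc]
  · have hmem : (1 : O) ∈ near := by simp [near, t]
    rw [eval_multiset_prod]
    exact Multiset.prod_eq_zero (by simpa [sub_eq_zero] using hmem)
  · have hmem : (0 : O) ∈ far := by simp [far, t]
    rw [eval_multiset_prod]
    exact Multiset.prod_eq_zero (by simpa using hmem)

theorem aeval_eq_self_of_isIdempotentElem {B : Type*} [Ring B] [Algebra O B] {e : B}
    (he : IsIdempotentElem e) {q : O[X]} (h0 : q.eval 0 = 0) (h1 : q.eval 1 = 1) :
    aeval e q = e := by
  have hdvd : X * (X - 1) ∣ q - X := by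
    refine IsCoprime.mul_dvd ⟨1, -1, by ring⟩ ?_ ?_
    · rw [X_dvd_iff, coeff_zero_eq_eval_zero, eval_sub, h0, eval_X, sub_zero]
    · rw [← C_1, dvd_iff_isRoot, IsRoot, eval_sub, h1, eval_X, sub_self]
  obtain ⟨r, hr⟩ := hdvd
  have hzero : aeval e (X * (X - 1) : O[X]) = 0 := by
    rw [map_mul, map_sub, map_one, aeval_X, mul_sub, mul_one, he.eq, sub_self]
  have hsub : aeval e (q - X) = 0 := by rw [hr, map_mul, hzero, zero_mul]
  rwa [map_sub, aeval_X, sub_eq_zero] at hsub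

variable {A : Type*} [Ring A] [Algebra O A]

theorem exists_isIdempotentElem_aeval_of_splits [IsLocalRing O] {f : O[X]} (hf : f.Monic)
    (hs : f.Splits) {z : A} (hz : aeval z f = 0) :
    ∃ q : O[X], q.eval 0 = 0 ∧ q.eval 1 = 1 ∧ IsIdempotentElem (aeval z q) := by
  obtain ⟨g, h, ⟨u, v, huv⟩, hgh, hg1, hh0⟩ := exists_isCoprime_mul_eq_of_splits hf hs
  refine ⟨v * h, by rw [eval_mul, hh0, mul_zero], ?_, ?_⟩
  · simpa [hg1] using congrArg (eval 1) huv
  · rw [isIdempotentElem_iff_mul_one_sub_self, ← map_one (aeval (R := O) z), ← map_sub, ← map_mul]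
    have hmul : v * h * (1 - v * h) = v * u * X * (X - 1) * f := by
      linear_combination (- v * h) * huv + v * u * hgh
    rw [hmul, map_mul, hz, mul_zero]

theorem aeval_mem_center {z : A} (hz : z ∈ Subring.center A) (q : O[X]) :
    aeval z q ∈ Subring.center A :=
  Algebra.adjoin_le (S := Subalgebra.center O A) (Set.singleton_subset_iff.2 hz)
    (aeval_mem_adjoin_singleton O z)

end SplitPolynomials

section LocalRing

open Polynomial

theorem bijOn_centralIdempotents_of_splits {O A : Type*} [CommRing O] [IsLocalRing O]
    [IsNoetherianRing O] [Ring A] [Algebra O A] [Module.Finite O A]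
    (hsplit : ∀ z ∈ Subring.center A, ∃ f : O[X], f.Monic ∧ f.Splits ∧ aeval z f = 0) :
    Set.BijOn
      (Algebra.TensorProduct.includeRight : A →ₐ[O] IsLocalRing.ResidueField O ⊗[O] A).toRingHom
      (centralIdempotents A) (centralIdempotents (IsLocalRing.ResidueField O ⊗[O] A)) := by
  have hjac := IsLocalRing.maximalIdeal_le_jacobson (⊥ : Ideal O)
  refine ⟨fun e he => ⟨map_mem_center_of_surjective ?_ he.1, he.2.map _⟩,
    injOn_centralIdempotents fun u hu hzero => ?_, fun e he => ?_⟩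
  · exact includeRight_quotient_surjective (I := IsLocalRing.maximalIdeal O)
  · exact eq_zero_of_isIdempotentElem_of_mem_smul_top hjac hu.2
      (includeRight_quotient_eq_zero_iff.1 hzero)
  · obtain ⟨z, hz, rfl⟩ := exists_mem_center_includeRight_eq hjac he
    obtain ⟨f, hf, hfs, hfz⟩ := hsplit z hz
    obtain ⟨q, hq0, hq1, hqz⟩ := exists_isIdempotentElem_aeval_of_splits hf hfs hfz
    refine ⟨aeval z q, ⟨aeval_mem_center hz q, hqz⟩, ?_⟩
    exact (aeval_algHom_apply Algebra.TensorProduct.includeRight z q).symm.trans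
      (aeval_eq_self_of_isIdempotentElem he.2 hq0 hq1)

end LocalRing

section SplitAlgebras

universe v

open Polynomial

variable {F : Type*} [Field F]

open UniqueFactorizationMonoid in
theorem splits_of_forall_irreducible_dvd {f : F[X]} (hf : f ≠ 0)
    (h : ∀ p, Irreducible p → p ∣ f → ∃ c, p.IsRoot c) : f.Splits := by
  obtain ⟨u, hu⟩ := factors_prod hf
  rw [← hu]
  refine .mul (.multisetProd fun p hp => ?_) u.isUnit.splits
  have hirr := irreducible_of_factor p hp
  obtain ⟨c, hc⟩ := h p hirr (dvd_of_mem_factors hp)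
  exact .of_degree_eq_one (degree_eq_one_of_irreducible_of_root hirr hc)

theorem minpoly_splits_of_forall_isMaximal {R : Type*} [Ring R] [Algebra F R] {x : R}
    (hx : IsIntegral F x) (h : ∀ J : Ideal R, J.IsMaximal → ∃ c : F, x - algebraMap F R c ∈ J) :
    (minpoly F x).Splits := by
  refine splits_of_forall_irreducible_dvd (minpoly.ne_zero hx) fun p hp hdvd => ?_
  have hproper : Ideal.span {aeval x p} ≠ ⊤ := by
    intro htop
    obtain ⟨u, hu⟩ := Ideal.mem_span_singleton'.1 ((Ideal.eq_top_iff_one _).1 htop)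
    obtain ⟨r, hr⟩ := hdvd
    have hrx : aeval x r = 0 := by
      rw [← one_mul (aeval x r), ← hu, mul_assoc, ← map_mul, ← hr, minpoly.aeval, mul_zero]
    have hpr : p * r ∣ 1 * r := by rw [← hr, one_mul]; exact minpoly.dvd F x hrx
    have hr0 : r ≠ 0 := right_ne_zero_of_mul (hr ▸ minpoly.ne_zero hx)
    exact hp.not_isUnit (isUnit_of_dvd_one ((mul_dvd_mul_iff_right hr0).1 hpr))
  obtain ⟨J, hJ, hle⟩ := Ideal.exists_le_maximal _ hproper
  obtain ⟨c, hc⟩ := h J hJ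
  have hpJ : aeval x p ∈ J := hle (Ideal.mem_span_singleton_self _)
  have heval : algebraMap F R (p.eval c) ∈ J := by
    obtain ⟨r, hr⟩ := X_sub_C_dvd_sub_C_eval (a := c) (p := p)
    have hsub : aeval x p - algebraMap F R (p.eval c) = aeval x r * (x - algebraMap F R c) := by
      simpa [mul_comm (X - C c)] using congrArg (aeval x) hr
    have hmem := J.sub_mem hpJ (hsub ▸ J.mul_mem_left (aeval x r) hc)
    rwa [sub_sub_cancel] at hmem
  refine ⟨c, by_contra fun hne => hJ.ne_top ?_⟩
  exact J.eq_top_of_isUnit_mem heval ((IsUnit.mk0 _ hne).map (algebraMap F R))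

theorem minpoly_splits_of_mem_center {R : Type v} [Ring R] [Algebra F R]
    (hsplit : ∀ (M : Type v) (_ : AddCommGroup M) (_ : Module R M), IsSimpleModule R M →
      ∀ f : M →ₗ[R] M, ∃ c : F, ∀ x : M, f x = algebraMap F R c • x)
    {z : R} (hz : z ∈ Subring.center R) (hint : IsIntegral F z) : (minpoly F z).Splits := by
  refine minpoly_splits_of_forall_isMaximal hint fun J hJ => ?_
  let mulZ : (R ⧸ J) →ₗ[R] (R ⧸ J) :=
    { toFun := (z • ·)
      map_add' := smul_add z
      map_smul' r x := by
        rw [RingHom.id_apply, smul_smul, smul_smul, Subring.mem_center_iff.1 hz r] }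
  obtain ⟨c, hc⟩ := hsplit (R ⧸ J) _ _ (isSimpleModule_iff_isCoatom.2 hJ.out) mulZ
  refine ⟨c, ?_⟩
  have h1 : z • (Submodule.Quotient.mk 1 : R ⧸ J) = algebraMap F R c • Submodule.Quotient.mk 1 :=
    hc _
  rwa [← Submodule.Quotient.mk_smul, ← Submodule.Quotient.mk_smul, Submodule.Quotient.eq,
    smul_eq_mul, smul_eq_mul, mul_one, mul_one] at h1

end SplitAlgebras

section FractionField

open Polynomial
open Algebra.TensorProduct (includeRight)

variable {O F : Type*} [CommRing O] [Field F] [Algebra O F] [IsFractionRing O F]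

theorem exists_monic_splits_map_eq_minpoly [IsIntegrallyClosed O] {R : Type*} [Ring R]
    [Algebra F R] [Algebra O R] [IsScalarTower O F R] {x : R} (hx : IsIntegral O x)
    (hsplit : (minpoly F x).Splits) :
    ∃ f : O[X], f.Monic ∧ f.Splits ∧ f.map (algebraMap O F) = minpoly F x := by
  have hroots : ∀ c ∈ (minpoly F x).roots, c ∈ (algebraMap O F).range := by
    intro c hc
    obtain ⟨p, hp, hpx⟩ := hx
    have hdvd : minpoly F x ∣ p.map (algebraMap O F) :=
      minpoly.dvd F x (by rwa [aeval_map_algebraMap])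
    have hpc := (isRoot_of_mem_roots hc).dvd hdvd
    exact IsIntegrallyClosed.isIntegral_iff.1 ⟨p, hp, by rwa [IsRoot, eval_map] at hpc⟩
  have hlifts := hsplit.mem_lift_of_roots_mem_range (minpoly.monic hx.tower_top) _ hroots
  obtain ⟨f, hmap, -, hf⟩ := lifts_and_natDegree_eq_and_monic hlifts (minpoly.monic hx.tower_top)
  rw [← hmap] at hsplit hroots
  exact ⟨f, hf, .of_splits_map_of_injective (IsFractionRing.injective O F) hsplit hroots, hmap⟩

variable {A : Type*} [Ring A] [Algebra O A]

variable (O F A) in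
theorem includeRight_injective_of_isTorsionFree [Module.IsTorsionFree O A] :
    Function.Injective (includeRight : A →ₐ[O] F ⊗[O] A) :=
  (IsLocalizedModule.injective_iff_isRegular (nonZeroDivisors O) (TensorProduct.mk O F A 1)).2
    fun c => (isRegular_iff_mem_nonZeroDivisors.2 c.2).isSMulRegular

theorem exists_monic_splits_aeval_eq_zero [IsIntegrallyClosed O] [Module.Finite O A]
    [Module.IsTorsionFree O A] {z : A}
    (hsplit : (minpoly F (includeRight z : F ⊗[O] A)).Splits) :
    ∃ f : O[X], f.Monic ∧ f.Splits ∧ aeval z f = 0 := by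
  have hint : IsIntegral O (includeRight z : F ⊗[O] A) := (Algebra.IsIntegral.isIntegral z).map _
  obtain ⟨f, hf, hfs, hmap⟩ := exists_monic_splits_map_eq_minpoly hint hsplit
  refine ⟨f, hf, hfs, includeRight_injective_of_isTorsionFree O F A ?_⟩
  rw [map_zero, ← aeval_algHom_apply, ← aeval_map_algebraMap F, hmap, minpoly.aeval]

end FractionField

theorem residue_reduction_bijection_on_blocks_general
    {O F A : Type*} [CommRing O] [IsLocalRing O] [IsNoetherianRing O]
    [IsIntegrallyClosed O] [Field F] [Algebra O F] [IsFractionRing O F]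
    [Ring A] [Algebra O A] [Module.Finite O A] [Module.IsTorsionFree O A]
    (hsplit : ∀ z ∈ Subring.center (F ⊗[O] A), (minpoly F z).Splits) :
    (∀ z ∈ Subring.center A,
      (Algebra.TensorProduct.includeRight z : IsLocalRing.ResidueField O ⊗[O] A)
        ∈ Subring.center (IsLocalRing.ResidueField O ⊗[O] A)) ∧
    Set.BijOn
      (fun a : A =>
        (Algebra.TensorProduct.includeRight a : IsLocalRing.ResidueField O ⊗[O] A))
      {e : A | IsBlockIdempotent e}
      {e : IsLocalRing.ResidueField O ⊗[O] A | IsBlockIdempotent e} :=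
  ⟨fun _ hz => includeRight_mem_center hz,
    bijOn_isBlockIdempotent <| bijOn_centralIdempotents_of_splits fun _ hz =>
      exists_monic_splits_aeval_eq_zero (hsplit _ (includeRight_mem_center hz))⟩

/-- Let `O` be a discrete valuation ring with field of fractions `F` and
residue field `k`, and let `A` be an `O`-algebra, free and finitely generated as an
`O`-module, such that `F ⊗_O A` is split semisimple. Then the reduction map
`A → k ⊗_O A`, which sends the center `Z(A)` into the center `Z(k ⊗_O A)`, induces a
bijection from the set of primitive idempotents of `Z(A)` (blocks of `A`) onto the set of
primitive idempotents of `Z(k ⊗_O A)` (blocks of `k ⊗_O A`). -/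
theorem residue_reduction_bijection_on_blocks
    (O : Type) [CommRing O] [IsDomain O] [IsDiscreteValuationRing O]
    (F : Type) [Field F] [Algebra O F] [IsFractionRing O F]
    (A : Type) [Ring A] [Algebra O A] [Module.Finite O A] [Module.Free O A]
    (hsemisimple : IsSemisimpleRing (F ⊗[O] A))
    (hsplit : ∀ (M : Type) (_ : AddCommGroup M) (_ : Module (F ⊗[O] A) M),
      IsSimpleModule (F ⊗[O] A) M →
        ∀ f : M →ₗ[F ⊗[O] A] M, ∃ c : F, ∀ x : M, f x = algebraMap F (F ⊗[O] A) c • x) :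
    (∀ z ∈ Subring.center A,
      (Algebra.TensorProduct.includeRight z : IsLocalRing.ResidueField O ⊗[O] A)
        ∈ Subring.center (IsLocalRing.ResidueField O ⊗[O] A)) ∧
    Set.BijOn
      (fun a : A =>
        (Algebra.TensorProduct.includeRight a : IsLocalRing.ResidueField O ⊗[O] A))
      {e : A | IsBlockIdempotent e}
      {e : IsLocalRing.ResidueField O ⊗[O] A | IsBlockIdempotent e} := by
  exact residue_reduction_bijection_on_blocks_general fun _ hz =>
    minpoly_splits_of_mem_center hsplit hz (Algebra.IsIntegral.isIntegral _)
end

section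
/- Let O be a Noetherian integrally closed domain with field of fractions F, let A be an O-algebra that is free and finitely generated as an O-module, let K be a finite Galois extension of F, and let O_K be the integral closure of O in K. An idempotent e of Z(O_K ⊗_O A) lies in Z(A) (identifying A with O ⊗_O A ⊆ O_K ⊗_O A) if and only if σ(e) = e for all σ ∈ Gal(K/F). -/
/-!
Being fixed by `Gal(K/F)` is a linear condition: an element of `O_K` is fixed when it lies in the
joint kernel of the maps `σ - 1`, and that kernel is `O` because `O` is integrally closed and
`K/F` is Galois. Tensoring with a flat module preserves kernels, hence joint kernels of finitely
many maps, so the fixed elements of `O_K ⊗ A` are those of `O ⊗ A`. When `K/F` is infinite there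
are infinitely many maps `σ - 1`, but an element of `O_K ⊗ A` involves only finitely many elements
of `O_K`; each of these has finitely many conjugates, so only finitely many restrictions of the
maps `σ - 1` matter.
-/

open scoped TensorProduct
set_option synthInstance.maxHeartbeats 1000000

variable (O : Type) [CommRing O] [IsDomain O] [IsNoetherianRing O] [IsIntegrallyClosed O]
  (F : Type) [Field F] [Algebra O F] [IsFractionRing O F]
  (K : Type) [Field K] [Algebra F K] [FiniteDimensional F K] [IsGalois F K]
  [Algebra O K] [IsScalarTower O F K]
  (A : Type) [Ring A] [Algebra O A] [Module.Finite O A] [Module.Free O A]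

/-- The semilinear action of `Gal(K/F)` on `O_K ⊗_O A` through the first factor, where
`O_K` is the integral closure of `O` in `K`: `σ(λ ⊗ a) = σ(λ) ⊗ a`. -/
noncomputable def galoisActOnTensor (σ : K ≃ₐ[F] K) :
    ((integralClosure O K) ⊗[O] A) ≃ₐ[O] ((integralClosure O K) ⊗[O] A) :=
  Algebra.TensorProduct.congr (galRestrict O F K (integralClosure O K) σ) AlgEquiv.refl

/-- The `Gal(K/F)`-orbit of an element of `O_K ⊗_O A`. -/
noncomputable def galoisOrbit (e : (integralClosure O K) ⊗[O] A) :
    Set ((integralClosure O K) ⊗[O] A) :=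
  Set.range fun σ : K ≃ₐ[F] K => galoisActOnTensor O F K A σ e

section JointKernel

variable {R N P : Type*} [CommRing R] [AddCommGroup N] [Module R N] [AddCommGroup P] [Module R P]
variable {ι : Type*} {f : ι → N →ₗ[R] P}

theorem finite_range_linearMap_of_pointwise_finite [Module.Finite R N]
    (hf : ∀ n, (Set.range fun i ↦ f i n).Finite) : (Set.range f).Finite := by
  obtain ⟨s, hs⟩ := Module.Finite.fg_top (R := R) (M := N)
  let restrict (g : N →ₗ[R] P) (n : s) : P := g n
  have restrict_injective : Function.Injective restrict := fun g h hgh ↦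
    LinearMap.ext_on hs fun n hn ↦ congrFun hgh ⟨n, hn⟩
  refine .of_finite_image ?_ restrict_injective.injOn
  refine (Set.Finite.pi' fun n : s ↦ hf n).subset ?_
  rintro _ ⟨_, ⟨i, rfl⟩, rfl⟩ n
  exact ⟨i, rfl⟩

variable (M : Type*) [AddCommGroup M] [Module R M]

variable (f) in
theorem range_rTensor_subtype_iInf_ker_le :
    LinearMap.range ((⨅ i, LinearMap.ker (f i)).subtype.rTensor M) ≤
      ⨅ i, LinearMap.ker ((f i).rTensor M) := by
  refine le_iInf fun i ↦ LinearMap.range_le_ker_iff.mpr ?_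
  have f_comp_subtype : f i ∘ₗ (⨅ i, LinearMap.ker (f i)).subtype = 0 :=
    LinearMap.range_le_ker_iff.mp ((Submodule.range_subtype _).trans_le (iInf_le _ i))
  rw [← LinearMap.rTensor_comp, f_comp_subtype, LinearMap.rTensor_zero]

variable [Module.Flat R M]

variable (f) in
theorem iInf_ker_rTensor_of_finite [Finite ι] :
    ⨅ i, LinearMap.ker ((f i).rTensor M) =
      LinearMap.range ((⨅ i, LinearMap.ker (f i)).subtype.rTensor M) := by
  classical
  have := Fintype.ofFinite ι
  have exact_pi : Function.Exact (⨅ i, LinearMap.ker (f i)).subtype (LinearMap.pi f) := by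
    rw [LinearMap.exact_iff, LinearMap.ker_pi, Submodule.range_subtype]
  have pi_rTensor : LinearMap.pi (fun i ↦ (f i).rTensor M) =
      (TensorProduct.piLeft R M fun _ : ι ↦ P).toLinearMap ∘ₗ (LinearMap.pi f).rTensor M := by
    ext
    simp
  rw [← LinearMap.ker_pi, pi_rTensor, LinearEquiv.ker_comp]
  exact LinearMap.exact_iff.mp (Module.Flat.rTensor_exact M exact_pi)

theorem iInf_ker_rTensor_of_finite_range (hf : (Set.range f).Finite) :
    ⨅ i, LinearMap.ker ((f i).rTensor M) =
      LinearMap.range ((⨅ i, LinearMap.ker (f i)).subtype.rTensor M) := by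
  have := hf.to_subtype
  have h := iInf_ker_rTensor_of_finite (fun g : Set.range f ↦ (g : N →ₗ[R] P)) M
  rwa [iInf_range' (fun g : N →ₗ[R] P ↦ LinearMap.ker (g.rTensor M)) f,
    iInf_range' (fun g : N →ₗ[R] P ↦ LinearMap.ker g) f] at h

theorem iInf_ker_rTensor_of_pointwise_finite (hf : ∀ n, (Set.range fun i ↦ f i n).Finite) :
    ⨅ i, LinearMap.ker ((f i).rTensor M) =
      LinearMap.range ((⨅ i, LinearMap.ker (f i)).subtype.rTensor M) := by
  refine le_antisymm (fun x hx ↦ ?_) (range_rTensor_subtype_iInf_ker_le f M)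
  obtain ⟨J, hJ, y, rfl⟩ := Submodule.exists_fg_le_eq_rTensor_subtype x
  have := Module.Finite.iff_fg.mpr hJ
  have hy : y ∈ ⨅ i, LinearMap.ker ((f i ∘ₗ J.subtype).rTensor M) := by
    simpa [LinearMap.rTensor_comp_apply] using hx
  rw [iInf_ker_rTensor_of_finite_range M
    (finite_range_linearMap_of_pointwise_finite fun n : J ↦ hf n)] at hy
  obtain ⟨z, rfl⟩ := hy
  have maps_ker : ∀ n ∈ ⨅ i, LinearMap.ker (f i ∘ₗ J.subtype),
      J.subtype n ∈ ⨅ i, LinearMap.ker (f i) := by simp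
  refine ⟨(J.subtype.restrict maps_ker).rTensor M z, ?_⟩
  rw [← LinearMap.rTensor_comp_apply, ← LinearMap.rTensor_comp_apply,
    LinearMap.subtype_comp_restrict, LinearMap.domRestrict]

end JointKernel

section FixedTensors

variable {R M : Type*} [CommRing R] [AddCommGroup M] [Module R M]

theorem range_rTensor_subtype_le_range_mk_one {S : Type*} [Ring S] [Algebra R S]
    {N : Submodule R S} (hN : N ≤ 1) :
    LinearMap.range (N.subtype.rTensor M) ≤ LinearMap.range (TensorProduct.mk R S M 1) := by
  rintro _ ⟨z, rfl⟩
  induction z with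
  | zero => simp
  | add z w hz hw => rw [map_add]; exact add_mem hz hw
  | tmul n m =>
    obtain ⟨r, hr⟩ := Submodule.mem_one.mp (hN n.2)
    refine ⟨r • m, ?_⟩
    simp [← hr, Algebra.algebraMap_eq_smul_one, TensorProduct.smul_tmul]

variable {S : Type*} [CommRing S] [IsDomain S] [Algebra R S]

theorem finite_range_algHom_apply {s : S} (hs : IsIntegral R s) :
    (Set.range fun φ : S →ₐ[R] S ↦ φ s).Finite := by
  refine ((minpoly R s).rootSet_finite S).subset ?_
  rintro _ ⟨φ, rfl⟩
  rw [Polynomial.mem_rootSet']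
  refine ⟨((minpoly.monic hs).map _).ne_zero, ?_⟩
  rw [Polynomial.aeval_algHom_apply, minpoly.aeval, map_zero]

theorem mem_range_mk_one_iff_forall_rTensor_eq [Algebra.IsIntegral R S] [Module.Flat R M]
    {ι : Type*} {φ : ι → S →ₐ[R] S}
    (hφ : ∀ s, (∀ i, φ i s = s) → s ∈ Set.range (algebraMap R S)) {x : S ⊗[R] M} :
    x ∈ LinearMap.range (TensorProduct.mk R S M 1) ↔
      ∀ i, (φ i).toLinearMap.rTensor M x = x := by
  constructor
  · rintro ⟨m, rfl⟩ i
    simp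
  · intro hx
    let f (i : ι) : S →ₗ[R] S := (φ i).toLinearMap - LinearMap.id
    have finite_f (s : S) : (Set.range fun i ↦ f i s).Finite := by
      refine ((finite_range_algHom_apply (Algebra.IsIntegral.isIntegral (R := R) s)).image
        (· - s)).subset ?_
      rintro _ ⟨i, rfl⟩
      exact ⟨φ i s, ⟨φ i, rfl⟩, rfl⟩
    have iInf_ker_f_le : ⨅ i, LinearMap.ker (f i) ≤ 1 := fun s hs ↦
      Submodule.mem_one.mpr (hφ s (by simpa [f, sub_eq_zero] using hs))
    have mem_iInf_ker : x ∈ ⨅ i, LinearMap.ker ((f i).rTensor M) := by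
      simpa [f, LinearMap.rTensor_sub, sub_eq_zero] using hx
    rw [iInf_ker_rTensor_of_pointwise_finite M finite_f] at mem_iInf_ker
    exact range_rTensor_subtype_le_range_mk_one iInf_ker_f_le mem_iInf_ker

end FixedTensors

section Galois

variable {R K L S : Type*} [CommRing R] [IsIntegrallyClosed R] [Field K] [Algebra R K]
  [IsFractionRing R K] [Field L] [Algebra K L] [IsGalois K L] [Algebra R L] [IsScalarTower R K L]
  [CommRing S] [Algebra R S] [Algebra S L] [IsScalarTower R S L] [IsIntegralClosure S R L]

theorem mem_range_algebraMap_of_forall_galRestrict_eq {s : S}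
    (hs : ∀ σ : Gal(L/K), galRestrict R K L S σ s = s) : s ∈ Set.range (algebraMap R S) := by
  have fixed (σ : Gal(L/K)) : σ (algebraMap S L s) = algebraMap S L s := by
    rw [← algebraMap_galRestrict_apply R, hs]
  obtain ⟨k, hk⟩ := (InfiniteGalois.mem_range_algebraMap_iff_fixed _).mpr fixed
  have integral_k : IsIntegral R k := by
    rw [← isIntegral_algebraMap_iff (algebraMap K L).injective, hk]
    exact (IsIntegralClosure.isIntegral R L s).algebraMap
  obtain ⟨r, rfl⟩ := IsIntegrallyClosed.isIntegral_iff.mp integral_k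
  refine ⟨r, IsIntegralClosure.algebraMap_injective S R L ?_⟩
  rw [← hk, ← IsScalarTower.algebraMap_apply, ← IsScalarTower.algebraMap_apply]

theorem central_idempotent_mem_base_iff_galois_fixed_general {A : Type*} [Ring A] [Algebra R A]
    [Module.Flat R A] {x : S ⊗[R] A} :
    (∃ a : A, (Algebra.TensorProduct.includeRight a : S ⊗[R] A) = x) ↔
      ∀ σ : Gal(L/K), Algebra.TensorProduct.congr (galRestrict R K L S σ) AlgEquiv.refl x = x := by
  have : IsDomain S := (IsIntegralClosure.algebraMap_injective S R L).isDomain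
  have : Algebra.IsIntegral R S := IsIntegralClosure.isIntegral_algebra R L
  exact mem_range_mk_one_iff_forall_rTensor_eq (φ := fun σ ↦ (galRestrict R K L S σ).toAlgHom)
    fun _ ↦ mem_range_algebraMap_of_forall_galRestrict_eq

end Galois

/-- Let `O` be a Noetherian integrally closed domain with field of fractions
`F`, `A` an `O`-algebra free and finitely generated as an `O`-module, `K/F` a finite Galois
extension and `O_K` the integral closure of `O` in `K`. An idempotent `e` of `Z(O_K ⊗_O A)`
lies in `Z(A)` (identifying `A` with `O ⊗_O A ⊆ O_K ⊗_O A`) if and only if `σ(e) = e` for all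
`σ ∈ Gal(K/F)`. -/
theorem central_idempotent_mem_base_iff_galois_fixed
    (e : (integralClosure O K) ⊗[O] A)
    (hcent : e ∈ Subring.center ((integralClosure O K) ⊗[O] A))
    (hidem : IsIdempotentElem e) :
    (∃ a : A, (Algebra.TensorProduct.includeRight a :
        (integralClosure O K) ⊗[O] A) = e) ↔
      ∀ σ : K ≃ₐ[F] K, galoisActOnTensor O F K A σ e = e := by
  exact central_idempotent_mem_base_iff_galois_fixed_general
end

section
/- Let O be a Noetherian integrally closed domain with field of fractions F, let A be an O-algebra that is free and finitely generated as an O-module, and let K be a finite Galois extension of F such that KA := K ⊗_O A is split semisimple, with primitive central idempotents {e_χ : χ ∈ Irr(KA)}. Then there exists a unique partition Bl(A) of Irr(KA) such that: (a) for every B ∈ Bl(A), the element e_B := Σ_{χ ∈ B} e_χ is a primitive idempotent of Z(A); (b) 1 = Σ_{B ∈ Bl(A)} e_B, and every central idempotent e of A is of the form e = Σ_{B ∈ S} e_B for some subset S ⊆ Bl(A). In particular, {e_B : B ∈ Bl(A)} is exactly the set of primitive idempotents of Z(A). -/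
open scoped TensorProduct
set_option synthInstance.maxHeartbeats 1000000
set_option maxHeartbeats 1000000

/-!
In a ring with finitely many central idempotents, the central idempotents form a finite Boolean
algebra whose atoms are the blocks, so a central idempotent is the same thing as a set of blocks.
If `i : A →+* R` is injective and maps the center to the center, it identifies the Boolean algebra
of `A` with a subalgebra of that of `R`; the atoms of a subalgebra partition the atoms of the
ambient algebra, and that partition determines them. The theorem is the case `R = K ⊗[O] A`, where
there are finitely many central idempotents because the center is a finite-dimensional `K`-algebra.
-/

/-- A central idempotent of a ring, as a predicate on its elements, so that central idempotents of
different rings can be compared along a ring homomorphism. -/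
structure IsCentralIdempotent {R : Type*} [Ring R] (e : R) : Prop where
  mem_center : e ∈ Subring.center R
  isIdempotentElem : IsIdempotentElem e

/-- The blocks of a ring that lie below `c` in the order `e ≤ c ↔ e * c = e` of central
idempotents; a central idempotent `c` is their sum if the ring has finitely many central
idempotents. -/
def blocksBelow {R : Type*} [Ring R] (c : R) : Set R :=
  {e | IsBlockIdempotent e ∧ e * c = e}

section CentralIdempotent

variable {R : Type*} [Ring R] {c e : R} {T : Set R}

namespace IsCentralIdempotent

theorem commute (he : IsCentralIdempotent e) (x : R) : Commute e x :=
  (Subring.mem_center_iff.1 he.mem_center x).symm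

theorem one : IsCentralIdempotent (1 : R) :=
  ⟨one_mem _, .one⟩

theorem mul (he : IsCentralIdempotent e) (hc : IsCentralIdempotent c) :
    IsCentralIdempotent (e * c) :=
  ⟨mul_mem he.mem_center hc.mem_center,
    .mul_of_commute (he.commute c) he.isIdempotentElem hc.isIdempotentElem⟩

theorem sub (hc : IsCentralIdempotent c) (he : IsCentralIdempotent e) (hec : e * c = e) :
    IsCentralIdempotent (c - e) :=
  ⟨sub_mem hc.mem_center he.mem_center,
    he.isIdempotentElem.sub hc.isIdempotentElem hec ((hc.commute e).eq.trans hec)⟩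

theorem map {S : Type*} [Ring S] {i : R →+* S}
    (hcenter : Subring.center R ≤ (Subring.center S).comap i) (hc : IsCentralIdempotent c) :
    IsCentralIdempotent (i c) :=
  ⟨hcenter hc.mem_center, hc.isIdempotentElem.map i⟩

end IsCentralIdempotent

namespace IsBlockIdempotent

theorem isCentralIdempotent (he : IsBlockIdempotent e) : IsCentralIdempotent e :=
  ⟨he.1, he.2.1⟩

theorem ne_zero (he : IsBlockIdempotent e) : e ≠ 0 :=
  he.2.2.1

theorem mul_eq_zero_or_mul_eq_self (he : IsBlockIdempotent e) (hc : IsCentralIdempotent c) :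
    e * c = 0 ∨ e * c = e := by
  have he' := he.isCentralIdempotent
  have hidem : e * e = e := he'.isIdempotentElem
  have hec := he'.mul hc
  have hle : e * c * e = e * c := by rw [(hec.commute e).eq, ← mul_assoc, hidem]
  have hsub := he'.sub hec hle
  have horth : e * c * (e - e * c) = 0 := by
    rw [mul_sub, hle, hec.isIdempotentElem.eq, sub_self]
  exact (he.2.2.2 _ _ hec.mem_center hsub.mem_center hec.isIdempotentElem hsub.isIdempotentElem
    horth (add_sub_cancel _ _).symm).imp_right fun h => (sub_eq_zero.1 h).symm

theorem mul_eq_zero_of_ne (he : IsBlockIdempotent e) (hc : IsBlockIdempotent c) (hne : e ≠ c) :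
    e * c = 0 := by
  have hcomm : e * c = c * e := he.isCentralIdempotent.commute c
  rcases he.mul_eq_zero_or_mul_eq_self hc.isCentralIdempotent with h | hec
  · exact h
  rcases hc.mul_eq_zero_or_mul_eq_self he.isCentralIdempotent with h | hce
  · exact hcomm.trans h
  · exact absurd (hec.symm.trans (hcomm.trans hce)) hne

theorem mul_finsum_of_mem (hfin : T.Finite) (hT : ∀ x ∈ T, IsBlockIdempotent x) (he : e ∈ T) :
    e * ∑ᶠ x ∈ T, x = e := by
  rw [mul_finsum_mem' _ _ hfin, finsum_mem_eq_finite_toFinset_sum _ hfin,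
    Finset.sum_eq_single_of_mem e (hfin.mem_toFinset.2 he)]
  · exact (hT e he).isCentralIdempotent.isIdempotentElem
  · exact fun x hx hne => (hT e he).mul_eq_zero_of_ne (hT x (hfin.mem_toFinset.1 hx)) hne.symm

theorem mul_finsum_of_notMem (he : IsBlockIdempotent e) (hfin : T.Finite)
    (hT : ∀ x ∈ T, IsBlockIdempotent x) (heT : e ∉ T) : e * ∑ᶠ x ∈ T, x = 0 := by
  rw [mul_finsum_mem' _ _ hfin]
  exact finsum_mem_eq_zero_of_forall_eq_zero fun x hx =>
    he.mul_eq_zero_of_ne (hT x hx) (ne_of_mem_of_not_mem hx heT).symm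

end IsBlockIdempotent

theorem isCentralIdempotent_finsum (hfin : T.Finite) (hT : ∀ x ∈ T, IsBlockIdempotent x) :
    IsCentralIdempotent (∑ᶠ x ∈ T, x) where
  mem_center := finsum_mem_induction (· ∈ Subring.center R) (zero_mem _)
    (fun _ _ => add_mem) fun x hx => (hT x hx).isCentralIdempotent.mem_center
  isIdempotentElem := by
    rw [IsIdempotentElem, finsum_mem_mul' _ _ hfin]
    exact finsum_mem_congr rfl fun x hx => IsBlockIdempotent.mul_finsum_of_mem hfin hT hx

theorem isBlockIdempotent_of_isAtom {z : {z : Subring.center R // IsIdempotentElem z}}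
    (hz : IsAtom z) : IsBlockIdempotent (z : R) := by
  refine ⟨z.1.2, congrArg Subtype.val z.2, fun h => hz.1 (Subtype.ext (Subtype.ext h)), ?_⟩
  intro f g hf _ hff _ hfg hsum
  let f' : {z : Subring.center R // IsIdempotentElem z} := ⟨⟨f, hf⟩, Subtype.ext hff⟩
  have hfz : f * z = f := by rw [hsum, mul_add, hff.eq, hfg, add_zero]
  have hle : f' ≤ z := Subtype.ext hfz
  rcases hz.le_iff.1 hle with hbot | heq
  · exact .inl (congrArg (·.1.1) hbot)
  · have hf_eq : f = z := congrArg (·.1.1) heq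
    exact .inr (left_eq_add.1 (hf_eq.trans hsum))

theorem blocksBelow_one : blocksBelow (1 : R) = {e | IsBlockIdempotent e} := by
  simp [blocksBelow]

theorem disjoint_blocksBelow (h : c * e = 0) : Disjoint (blocksBelow c) (blocksBelow e) := by
  refine Set.disjoint_left.2 fun x hxc hxe => hxc.1.ne_zero ?_
  calc x = x * c * e := by rw [hxc.2, hxe.2]
    _ = 0 := by rw [mul_assoc, h, mul_zero]

theorem blocksBelow_finsum (hfin : T.Finite) (hT : ∀ x ∈ T, IsBlockIdempotent x) :
    blocksBelow (∑ᶠ x ∈ T, x) = T := by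
  ext e
  refine ⟨fun he => ?_, fun he => ⟨hT e he, IsBlockIdempotent.mul_finsum_of_mem hfin hT he⟩⟩
  by_contra heT
  exact he.1.ne_zero (he.2.symm.trans (he.1.mul_finsum_of_notMem hfin hT heT))

theorem finite_blocksBelow (hfin : {e : R | IsCentralIdempotent e}.Finite) (c : R) :
    (blocksBelow c).Finite :=
  hfin.subset fun _ he => he.1.isCentralIdempotent

theorem blocksBelow_nonempty (hfin : {e : R | IsCentralIdempotent e}.Finite)
    (hc : IsCentralIdempotent c) (hc0 : c ≠ 0) : (blocksBelow c).Nonempty := by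
  have := hfin.to_subtype
  have : Finite {z : Subring.center R // IsIdempotentElem z} :=
    .of_injective
      (fun z => (⟨z, z.1.2, congrArg Subtype.val z.2⟩ : {e : R | IsCentralIdempotent e}))
      fun _ _ h => Subtype.ext (Subtype.ext (Subtype.mk.inj h))
  let c' : {z : Subring.center R // IsIdempotentElem z} :=
    ⟨⟨c, hc.mem_center⟩, Subtype.ext hc.isIdempotentElem⟩
  have hc' : c' ≠ ⊥ := fun h => hc0 (congrArg (·.1.1) h)
  obtain ⟨z, hz, hzc⟩ := (eq_bot_or_exists_atom_le c').resolve_left hc'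
  exact ⟨z, isBlockIdempotent_of_isAtom hz, congrArg Subtype.val hzc⟩

theorem finsum_blocksBelow (hfin : {e : R | IsCentralIdempotent e}.Finite)
    (hc : IsCentralIdempotent c) : ∑ᶠ e ∈ blocksBelow c, e = c := by
  have hbelow := finite_blocksBelow hfin c
  have hblocks : ∀ e ∈ blocksBelow c, IsBlockIdempotent e := fun e he => he.1
  set s := ∑ᶠ e ∈ blocksBelow c, e with hs
  have hsc : s * c = s := by
    rw [hs, finsum_mem_mul' _ _ hbelow]
    exact finsum_mem_congr rfl fun e he => he.2
  have hsub : IsCentralIdempotent (c - s) :=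
    hc.sub (isCentralIdempotent_finsum hbelow hblocks) hsc
  by_contra hne
  obtain ⟨e, he, hecs⟩ := blocksBelow_nonempty hfin hsub (sub_ne_zero.2 (Ne.symm hne))
  have hec : e * c = e := by
    calc e * c = e * (c - s) * c := by rw [hecs]
      _ = e := by rw [mul_assoc, sub_mul, hc.isIdempotentElem.eq, hsc, hecs]
  have hes : e * s = e := IsBlockIdempotent.mul_finsum_of_mem hbelow hblocks ⟨he, hec⟩
  exact he.ne_zero (by rw [← hecs, mul_sub, hec, hes, sub_self])

end CentralIdempotent

/-- The partition of the blocks of `R` into the sets of blocks below the images `i f` of the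
blocks `f` of `A`. -/
def blockPartition {A R : Type*} [Ring A] [Ring R] (i : A →+* R) : Set (Set R) :=
  (fun f => blocksBelow (i f)) '' {f | IsBlockIdempotent f}

section BlockPartition

variable {A R : Type*} [Ring A] [Ring R] {i : A →+* R}

theorem pairwiseDisjoint_blockPartition : (blockPartition i).PairwiseDisjoint id := by
  rintro _ ⟨f, hf, rfl⟩ _ ⟨g, hg, rfl⟩ hne
  have hfg : f * g = 0 := hf.mul_eq_zero_of_ne hg fun h => hne (by rw [h])
  exact disjoint_blocksBelow (by rw [← map_mul, hfg, map_zero])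

theorem finite_isCentralIdempotent_of_injective (hi : Function.Injective i)
    (hcenter : Subring.center A ≤ (Subring.center R).comap i)
    (hfin : {e : R | IsCentralIdempotent e}.Finite) : {e : A | IsCentralIdempotent e}.Finite :=
  (hfin.preimage hi.injOn).subset fun _ hc => hc.map hcenter

theorem nonempty_of_mem_blockPartition (hi : Function.Injective i)
    (hcenter : Subring.center A ≤ (Subring.center R).comap i)
    (hfin : {e : R | IsCentralIdempotent e}.Finite) {B : Set R} (hB : B ∈ blockPartition i) :
    B.Nonempty := by
  obtain ⟨f, hf, rfl⟩ := hB
  exact blocksBelow_nonempty hfin (hf.isCentralIdempotent.map hcenter)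
    ((map_ne_zero_iff i hi).2 hf.ne_zero)

theorem map_eq_finsum_blocksBelow (hfin : {e : A | IsCentralIdempotent e}.Finite) {c : A}
    (hc : IsCentralIdempotent c) : i c = ∑ᶠ f ∈ blocksBelow c, i f := by
  conv_lhs => rw [← finsum_blocksBelow hfin hc]
  exact i.toAddMonoidHom.map_finsum_mem _ (finite_blocksBelow hfin c)

theorem sUnion_blockPartition (hcenter : Subring.center A ≤ (Subring.center R).comap i)
    (hfin : {e : A | IsCentralIdempotent e}.Finite) :
    ⋃₀ blockPartition i = {e : R | IsBlockIdempotent e} := by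
  ext e
  refine ⟨fun ⟨_, ⟨_, _, hB⟩, he⟩ => (hB ▸ he : e ∈ blocksBelow _).1, fun he => ?_⟩
  by_contra hcon
  have horth : ∀ f ∈ blocksBelow (1 : A), e * i f = 0 := fun f hf =>
    (he.mul_eq_zero_or_mul_eq_self (hf.1.isCentralIdempotent.map hcenter)).resolve_right
      fun h => hcon ⟨_, ⟨f, hf.1, rfl⟩, he, h⟩
  refine he.ne_zero ?_
  calc e = e * i 1 := by rw [map_one, mul_one]
    _ = ∑ᶠ f ∈ blocksBelow (1 : A), e * i f := by
      rw [map_eq_finsum_blocksBelow hfin .one, mul_finsum_mem' _ _ (finite_blocksBelow hfin 1)]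
    _ = 0 := finsum_mem_eq_zero_of_forall_eq_zero horth

theorem map_eq_finsum_finsum (hi : Function.Injective i)
    (hcenter : Subring.center A ≤ (Subring.center R).comap i)
    (hfin : {e : R | IsCentralIdempotent e}.Finite) {c : A} (hc : IsCentralIdempotent c) :
    i c = ∑ᶠ B ∈ (fun f => blocksBelow (i f)) '' blocksBelow c, ∑ᶠ e ∈ B, e := by
  have hsum : ∀ f ∈ blocksBelow c, ∑ᶠ e ∈ blocksBelow (i f), e = i f := fun f hf =>
    finsum_blocksBelow hfin (hf.1.isCentralIdempotent.map hcenter)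
  have hinj : Set.InjOn (fun f => blocksBelow (i f)) (blocksBelow c) := fun f hf g hg hfg => by
    replace hfg : blocksBelow (i f) = blocksBelow (i g) := hfg
    exact hi (by rw [← hsum f hf, hfg, hsum g hg])
  rw [finsum_mem_image hinj, finsum_mem_congr rfl hsum]
  exact map_eq_finsum_blocksBelow (finite_isCentralIdempotent_of_injective hi hcenter hfin) hc

theorem subset_blockPartition (hfin : {e : R | IsCentralIdempotent e}.Finite) {P : Set (Set R)}
    (hP : ⋃₀ P ⊆ {e : R | IsBlockIdempotent e})
    (hsum : ∀ B ∈ P, ∃ f : A, IsBlockIdempotent f ∧ i f = ∑ᶠ e ∈ B, e) :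
    P ⊆ blockPartition i := by
  intro B hB
  obtain ⟨f, hf, hfB⟩ := hsum B hB
  have hblocks : ∀ e ∈ B, IsBlockIdempotent e := fun e he => hP ⟨B, hB, he⟩
  have hBfin : B.Finite := hfin.subset fun e he => (hblocks e he).isCentralIdempotent
  exact ⟨f, hf, (congrArg blocksBelow hfB).trans (blocksBelow_finsum hBfin hblocks)⟩

theorem exists_unique_block_partition_general (hi : Function.Injective i)
    (hcenter : Subring.center A ≤ (Subring.center R).comap i)
    (hfin : {e : R | IsCentralIdempotent e}.Finite) :
    ∃! P : Set (Set R),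
      ((∀ B ∈ P, B.Nonempty) ∧ P.PairwiseDisjoint id ∧
        ⋃₀ P = {e : R | IsBlockIdempotent e}) ∧
      (∀ B ∈ P, ∃ f : A, IsBlockIdempotent f ∧ i f = ∑ᶠ e ∈ B, e) ∧
      (∑ᶠ B ∈ P, ∑ᶠ e ∈ B, e) = 1 ∧
      (∀ c : A, c ∈ Subring.center A → IsIdempotentElem c →
        ∃ S ⊆ P, i c = ∑ᶠ B ∈ S, ∑ᶠ e ∈ B, e) := by
  have hnonempty : ∀ B ∈ blockPartition i, B.Nonempty := fun _ =>
    nonempty_of_mem_blockPartition hi hcenter hfin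
  have hunion := sUnion_blockPartition hcenter
    (finite_isCentralIdempotent_of_injective hi hcenter hfin)
  refine ⟨blockPartition i, ⟨⟨hnonempty, pairwiseDisjoint_blockPartition, hunion⟩, ?_, ?_, ?_⟩, ?_⟩
  · rintro _ ⟨f, hf, rfl⟩
    exact ⟨f, hf, (finsum_blocksBelow hfin (hf.isCentralIdempotent.map hcenter)).symm⟩
  · rw [blockPartition, ← blocksBelow_one, ← map_eq_finsum_finsum hi hcenter hfin .one, map_one]
  · exact fun c hc hcc => ⟨_, Set.image_mono fun f hf => hf.1,
      map_eq_finsum_finsum hi hcenter hfin ⟨hc, hcc⟩⟩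
  · rintro P ⟨⟨-, -, hPunion⟩, hPsum, -, -⟩
    have hsub : P ⊆ blockPartition i := subset_blockPartition hfin hPunion.subset hPsum
    have hdisj : (blockPartition i ∪ P).PairwiseDisjoint id := by
      rw [Set.union_eq_left.2 hsub]
      exact pairwiseDisjoint_blockPartition
    refine hsub.antisymm (hdisj.subset_of_biUnion_subset_biUnion hnonempty ?_)
    simpa only [id, Set.sUnion_eq_biUnion] using (hunion.trans hPunion.symm).le

end BlockPartition

theorem finite_isIdempotentElem_of_isArtinianRing (R : Type*) [CommRing R] [IsArtinianRing R] :
    Finite {e : R // IsIdempotentElem e} :=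
  .of_injective _ (PrimeSpectrum.isIdempotentElemEquivClopens (R := R)).injective

theorem finite_isCentralIdempotent_of_moduleFinite (k R : Type*) [CommRing k] [IsArtinianRing k]
    [Ring R] [Algebra k R] [Module.Finite k R] : {e : R | IsCentralIdempotent e}.Finite := by
  have : Module.Finite k (Subalgebra.center k R) :=
    .of_injective (Subalgebra.center k R).val.toLinearMap Subtype.val_injective
  have : IsArtinianRing (Subalgebra.center k R) := .of_finite k _
  have := finite_isIdempotentElem_of_isArtinianRing (Subalgebra.center k R)
  refine (Set.finite_range
    fun z : {z : Subalgebra.center k R // IsIdempotentElem z} => (z : R)).subset fun e he => ?_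
  exact ⟨⟨⟨e, he.mem_center⟩, Subtype.ext he.isIdempotentElem⟩, rfl⟩

theorem center_le_comap_includeRight (O K A : Type*) [CommRing O] [Ring K] [Algebra O K] [Ring A]
    [Algebra O A] : Subring.center A ≤ (Subring.center (K ⊗[O] A)).comap
      (Algebra.TensorProduct.includeRight : A →ₐ[O] K ⊗[O] A).toRingHom := by
  intro c hc
  refine Subring.mem_center_iff.2 fun x => ?_
  induction x using TensorProduct.induction_on with
  | zero => simp
  | tmul k a => simp [Subring.mem_center_iff.1 hc a]
  | add x y hx hy => rw [add_mul, mul_add, hx, hy]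

/-- Let `O` be a Noetherian integrally closed domain with fraction field `F`,
`A` an `O`-algebra free and finitely generated as an `O`-module, and `K/F` a finite Galois
extension such that `KA := K ⊗_O A` is split semisimple, with set of primitive central
idempotents `Irr(KA) = {e : KA | IsBlockIdempotent e}`. Then there is a unique partition
`Bl(A)` of this set such that: (a) for each part `B`, the sum `e_B := Σ_{e ∈ B} e` is a
primitive idempotent of `Z(A)`; (b) `1 = Σ_B e_B` and every central idempotent of `A` is a sum
`Σ_{B ∈ S} e_B` for some subset `S` of the parts. -/
theorem exists_unique_block_partition
    (O : Type) [CommRing O] [IsDomain O] [IsNoetherianRing O] [IsIntegrallyClosed O]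
    (F : Type) [Field F] [Algebra O F] [IsFractionRing O F]
    (K : Type) [Field K] [Algebra F K] [FiniteDimensional F K] [IsGalois F K]
    [Algebra O K] [IsScalarTower O F K]
    (A : Type) [Ring A] [Algebra O A] [Module.Finite O A] [Module.Free O A]
    (hsemisimple : IsSemisimpleRing (K ⊗[O] A))
    (hsplit : ∀ (M : Type) (_ : AddCommGroup M) (_ : Module (K ⊗[O] A) M),
      IsSimpleModule (K ⊗[O] A) M →
        ∀ f : M →ₗ[K ⊗[O] A] M, ∃ c : K, ∀ x : M, f x = algebraMap K (K ⊗[O] A) c • x) :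
    ∃! P : Set (Set (K ⊗[O] A)),
      ((∀ B ∈ P, B.Nonempty) ∧ P.PairwiseDisjoint id ∧
        ⋃₀ P = {e : K ⊗[O] A | IsBlockIdempotent e}) ∧
      (∀ B ∈ P, ∃ f : A, IsBlockIdempotent f ∧
        (Algebra.TensorProduct.includeRight f : K ⊗[O] A) = ∑ᶠ e ∈ B, e) ∧
      (∑ᶠ B ∈ P, ∑ᶠ e ∈ B, e) = 1 ∧
      (∀ c : A, c ∈ Subring.center A → IsIdempotentElem c →
        ∃ S ⊆ P, (Algebra.TensorProduct.includeRight c : K ⊗[O] A) =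
          ∑ᶠ B ∈ S, ∑ᶠ e ∈ B, e) := by
  have : FaithfulSMul O K := .trans O F K
  exact exists_unique_block_partition_general
    (Algebra.TensorProduct.includeRight_injective (FaithfulSMul.algebraMap_injective O K))
    (center_le_comap_includeRight O K A) (finite_isCentralIdempotent_of_moduleFinite K _)
end

section
/- Let K be a number field contained in ℚ(μ_∞) with ring of integers Z_K, and let R_K(y) := Z_K[y, y^{-1}, (y^n − 1)^{-1}_{n ≥ 1}] be the Rouquier ring of K. The group of units of R_K(y) consists exactly of the elements of the form u · y^n · Π_Φ Φ(y)^{n_Φ}, where u is a unit of Z_K, n ∈ ℤ, Φ runs over the set of K-cyclotomic polynomials, n_Φ ∈ ℤ, and n_Φ = 0 for all but finitely many Φ. -/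
/-- A `K`-cyclotomic polynomial: the minimal polynomial over `K` of a root of unity;
equivalently, a monic irreducible divisor of `X^n - 1` for some `n ≥ 1`. -/
def IsKCyclotomic {K : Type*} [Field K] (Φ : Polynomial K) : Prop :=
  Φ.Monic ∧ Irreducible Φ ∧ ∃ n : ℕ, 0 < n ∧ Φ ∣ (Polynomial.X ^ n - 1)

/-- The Rouquier ring `R_K(y) = Z_K[y, y^{-1}, (y^n - 1)^{-1}_{n ≥ 1}]`, realized as the
subring of the rational function field `K(y)` generated by `Z_K`, `y`, `y^{-1}` and the
inverses `(y^n - 1)^{-1}` for `n ≥ 1`. -/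
noncomputable def RouquierRing (K : Type*) [Field K] [NumberField K] : Subring (RatFunc K) :=
  Subring.closure
    ((algebraMap K (RatFunc K)) '' Set.range (algebraMap (NumberField.RingOfIntegers K) K)
      ∪ {RatFunc.X, RatFunc.X⁻¹}
      ∪ {x | ∃ n : ℕ, 0 < n ∧ x = (RatFunc.X ^ n - 1)⁻¹})

/-!
Let `R` be a ring integrally closed in `K`, for instance the ring of integers. Writing `M` for the
multiplicative set generated by `y` and the `y ^ n - 1`, the Rouquier ring is the localization
`R[y]_M`, so a unit is a fraction `P / D` with `D ∈ M` and `P` a divisor of an element of `M`.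
Elements of `M` are monic, hence `P` is a unit of `R` times a monic polynomial, and over `K` the
irreducible factors of elements of `M` are `y` and the `K`-cyclotomic polynomials. Conversely, if
`y ^ n - 1 = Φ Ψ` with `Φ` and `Ψ` monic, then both factors have coefficients in `R` because `R` is
integrally closed in `K`, and `Φ⁻¹ = Ψ / (y ^ n - 1)`.
-/

open Polynomial UniqueFactorizationMonoid

theorem zpow_mem_of_mem_of_inv_mem {G S : Type*} [DivisionMonoid G] [SetLike S G]
    [SubmonoidClass S G] {s : S} {x : G} (hx : x ∈ s) (hx' : x⁻¹ ∈ s) (n : ℤ) : x ^ n ∈ s := by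
  cases n with
  | ofNat n => simpa only [Int.ofNat_eq_natCast, zpow_natCast] using pow_mem hx n
  | negSucc n => simpa only [zpow_negSucc, inv_pow] using pow_mem hx' (n + 1)

theorem exists_isUnit_C_mul_monic_of_dvd_monic {R : Type*} [CommSemiring R] [NoZeroDivisors R]
    {p q : R[X]} (hq : q.Monic) (hpq : p ∣ q) :
    ∃ (w : R) (p' : R[X]), IsUnit w ∧ p'.Monic ∧ p = C w * p' := by
  obtain ⟨r, rfl⟩ := hpq
  have hlc : r.leadingCoeff * p.leadingCoeff = 1 := by
    rw [mul_comm, ← leadingCoeff_mul, hq.leadingCoeff]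
  refine ⟨p.leadingCoeff, C r.leadingCoeff * p, .of_mul_eq_one_right _ hlc,
    monic_C_mul_of_mul_leadingCoeff_eq_one hlc, ?_⟩
  rw [← mul_assoc, ← C_mul, mul_comm p.leadingCoeff, hlc, C_1, one_mul]

theorem exists_map_eq_of_monic_of_dvd_map {R K : Type*} [CommRing R] [Field K] [Algebra R K]
    [IsIntegrallyClosedIn R K] {f : R[X]} (hf : f.Monic) {g : K[X]} (hg : g.Monic)
    (hgf : g ∣ f.map (algebraMap R K)) : ∃ g' : R[X], g'.map (algebraMap R K) = g := by
  have hlift := (lifts_iff_coeff_lifts g).mp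
    (integralClosure.mem_lifts_of_monic_of_dvd_map K hf hg hgf)
  refine (mem_lifts g).mp ((lifts_iff_coeff_lifts g).mpr fun n ↦ ?_)
  obtain ⟨c, hc⟩ := hlift n
  exact IsIntegrallyClosedIn.algebraMap_eq_of_integral (hc ▸ c.2)

theorem algebraMap_div_algebraMap_eq_prod_zpow_count {A L : Type*} [CommSemiring A]
    [StrongNormalizationMonoid A] [UniqueFactorizationMonoid A] [DecidableEq A] [Field L]
    [Algebra A L] [FaithfulSMul A L] {a b : A} (ha : a ≠ 0) (hb : b ≠ 0)
    (ha' : normalize a = a) (hb' : normalize b = b) {T : Finset A}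
    (haT : (normalizedFactors a).toFinset ⊆ T) (hbT : (normalizedFactors b).toFinset ⊆ T)
    (hT : 0 ∉ T) :
    algebraMap A L a / algebraMap A L b = ∏ f ∈ T, algebraMap A L f ^
      ((normalizedFactors a).count f - (normalizedFactors b).count f : ℤ) := by
  have algebraMap_eq_prod {c : A} (hc : c ≠ 0) (hc' : normalize c = c)
      (hcT : (normalizedFactors c).toFinset ⊆ T) :
      algebraMap A L c = ∏ f ∈ T, algebraMap A L f ^ (normalizedFactors c).count f := by
    conv_lhs => rw [← hc', ← prod_normalizedFactors_eq hc,
      Finset.prod_multiset_count_of_subset _ T hcT, map_prod]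
    simp only [map_pow]
  rw [algebraMap_eq_prod ha ha' haT, algebraMap_eq_prod hb hb' hbT, ← Finset.prod_div_distrib]
  refine Finset.prod_congr rfl fun f hf ↦ (zpow_natCast_sub_natCast₀ ?_ _ _).symm
  exact (map_ne_zero_iff _ (FaithfulSMul.algebraMap_injective A L)).mpr fun h ↦ hT (h ▸ hf)

/-- The multiplicative set of `R[X]` generated by `X` and the polynomials `X ^ n - 1` for `n ≥ 1`,
at which `R[X]` is localized to obtain the Rouquier ring. -/
noncomputable def cyclotomicSubmonoid (R : Type*) [CommRing R] : Submonoid R[X] :=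
  Submonoid.closure (insert X {p | ∃ n : ℕ, 0 < n ∧ p = X ^ n - 1})

namespace cyclotomicSubmonoid

section CommRing

variable {R S : Type*} [CommRing R] [CommRing S]

theorem X_mem : X ∈ cyclotomicSubmonoid R :=
  Submonoid.subset_closure (Set.mem_insert _ _)

theorem X_pow_sub_one_mem {n : ℕ} (hn : 0 < n) : X ^ n - 1 ∈ cyclotomicSubmonoid R :=
  Submonoid.subset_closure (Set.mem_insert_of_mem _ ⟨n, hn, rfl⟩)

theorem monic {D : R[X]} (hD : D ∈ cyclotomicSubmonoid R) : D.Monic := by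
  induction hD using Submonoid.closure_induction with
  | mem D hD =>
    obtain rfl | ⟨n, hn, rfl⟩ := hD
    · exact monic_X
    · simpa only [C_1] using monic_X_pow_sub_C (1 : R) hn.ne'
  | one => exact monic_one
  | mul D E _ _ hD hE => exact hD.mul hE

theorem map_mem (φ : R →+* S) {D : R[X]} (hD : D ∈ cyclotomicSubmonoid R) :
    D.map φ ∈ cyclotomicSubmonoid S := by
  induction hD using Submonoid.closure_induction with
  | mem D hD =>
    obtain rfl | ⟨n, hn, rfl⟩ := hD
    · simpa only [map_X] using X_mem
    · simpa only [Polynomial.map_sub, Polynomial.map_pow, map_X, Polynomial.map_one]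
        using X_pow_sub_one_mem hn
  | one => simpa only [Polynomial.map_one] using one_mem _
  | mul D E _ _ hD hE => simpa only [Polynomial.map_mul] using mul_mem hD hE

end CommRing

section Field

variable {K : Type*} [Field K] {D : K[X]}

theorem eq_X_or_isKCyclotomic_of_dvd (hD : D ∈ cyclotomicSubmonoid K) {f : K[X]}
    (hf : Irreducible f) (hf' : f.Monic) (hfD : f ∣ D) : f = X ∨ IsKCyclotomic f := by
  induction hD using Submonoid.closure_induction with
  | mem D hD =>
    obtain rfl | hD := hD
    · exact .inl (eq_of_monic_of_associated hf' monic_X (hf.associated_of_dvd irreducible_X hfD))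
    · obtain ⟨n, hn, rfl⟩ := hD
      exact .inr ⟨hf', hf, n, hn, hfD⟩
  | one => exact absurd (isUnit_of_dvd_one hfD) hf.not_isUnit
  | mul D E _ _ hD hE => exact (hf.prime.dvd_or_dvd hfD).elim hD hE

theorem exists_div_eq_X_zpow_mul_prod (hD : D ∈ cyclotomicSubmonoid K) {p q : K[X]}
    (hp : p.Monic) (hq : q.Monic) (hpq : p * q ∣ D) :
    ∃ (n : ℤ) (S : Finset K[X]) (e : K[X] → ℤ), (∀ Φ ∈ S, IsKCyclotomic Φ) ∧
      algebraMap K[X] (RatFunc K) p / algebraMap K[X] (RatFunc K) q =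
        RatFunc.X ^ n * ∏ Φ ∈ S, algebraMap K[X] (RatFunc K) Φ ^ e Φ := by
  classical
  set S := (normalizedFactors (p * q)).toFinset.erase X
  let e : K[X] → ℤ := fun f ↦ (normalizedFactors p).count f - (normalizedFactors q).count f
  have factors_mul := normalizedFactors_mul hp.ne_zero hq.ne_zero
  have hScyc : ∀ Φ ∈ S, IsKCyclotomic Φ := by
    intro Φ hΦ
    obtain ⟨hΦX, hΦ⟩ := Finset.mem_erase.mp hΦ
    obtain ⟨hirr, hmonic, hdvd⟩ := (Polynomial.mem_normalizedFactors_iff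
      (mul_ne_zero hp.ne_zero hq.ne_zero)).mp (Multiset.mem_toFinset.mp hΦ)
    exact (eq_X_or_isKCyclotomic_of_dvd hD hirr hmonic (hdvd.trans hpq)).resolve_left hΦX
  have zero_notMem : 0 ∉ insert X S := fun h ↦
    (Finset.mem_insert.mp h).elim (X_ne_zero ·.symm) fun h ↦ (hScyc 0 h).1.ne_zero rfl
  have factors_subset : (normalizedFactors (p * q)).toFinset ⊆ insert X S :=
    Finset.insert_erase_subset _ _
  rw [factors_mul, Multiset.toFinset_add, Finset.union_subset_iff] at factors_subset
  refine ⟨e X, S, e, hScyc, ?_⟩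
  rw [algebraMap_div_algebraMap_eq_prod_zpow_count hp.ne_zero hq.ne_zero hp.normalize_eq_self
    hq.normalize_eq_self factors_subset.1 factors_subset.2 zero_notMem,
    Finset.prod_insert (Finset.notMem_erase _ _), RatFunc.algebraMap_X]

end Field

end cyclotomicSubmonoid

theorem algebraMap_mul_zpow_mul_prod_zpow_ne_zero {K : Type*} [Field K] {c : K} (hc : c ≠ 0)
    (n : ℤ) {S : Finset K[X]} (hS : ∀ Φ ∈ S, Φ ≠ 0) (e : K[X] → ℤ) :
    algebraMap K (RatFunc K) c * RatFunc.X ^ n *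
      ∏ Φ ∈ S, algebraMap K[X] (RatFunc K) Φ ^ e Φ ≠ 0 :=
  mul_ne_zero (mul_ne_zero ((_root_.map_ne_zero _).mpr hc) (zpow_ne_zero n RatFunc.X_ne_zero)) <|
    Finset.prod_ne_zero_iff.mpr fun Φ hΦ ↦
      zpow_ne_zero _ (RatFunc.algebraMap_ne_zero (hS Φ hΦ))

/-- The homomorphism `R[X] → K(X)` extending coefficients from `R` to `K`. -/
noncomputable def toRatFunc (R K : Type*) [CommRing R] [Field K] [Algebra R K] :
    R[X] →+* RatFunc K :=
  (algebraMap K[X] (RatFunc K)).comp (mapRingHom (algebraMap R K))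

section toRatFunc

variable {R : Type*} (K : Type*) [CommRing R] [Field K] [Algebra R K]

theorem toRatFunc_apply (p : R[X]) :
    toRatFunc R K p = algebraMap K[X] (RatFunc K) (p.map (algebraMap R K)) :=
  rfl

theorem toRatFunc_C (a : R) :
    toRatFunc R K (C a) = algebraMap K (RatFunc K) (algebraMap R K a) := by
  rw [toRatFunc_apply, map_C, RatFunc.algebraMap_C, RatFunc.algebraMap_eq_C]

theorem toRatFunc_X : toRatFunc R K X = RatFunc.X := by
  rw [toRatFunc_apply, map_X, RatFunc.algebraMap_X]

theorem toRatFunc_X_pow_sub_one (n : ℕ) : toRatFunc R K (X ^ n - 1) = RatFunc.X ^ n - 1 := by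
  rw [map_sub, map_pow, map_one, toRatFunc_X]

theorem toRatFunc_injective [FaithfulSMul R K] : Function.Injective (toRatFunc R K) :=
  (RatFunc.algebraMap_injective K).comp
    (map_injective _ (FaithfulSMul.algebraMap_injective R K))

theorem toRatFunc_ne_zero_of_monic {p : R[X]} (hp : p.Monic) : toRatFunc R K p ≠ 0 :=
  RatFunc.algebraMap_ne_zero (hp.map (algebraMap R K)).ne_zero

end toRatFunc

/-- The Rouquier ring with coefficients in an arbitrary commutative ring `R` mapping to `K`: the
subring of `K(y)` generated by the image of `R`, by `y`, `y⁻¹` and by the inverses `(y ^ n - 1)⁻¹`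
for `n ≥ 1`. For the ring of integers of a number field it is `RouquierRing K` by definition. -/
noncomputable def RouquierRingOver (R K : Type*) [CommRing R] [Field K] [Algebra R K] :
    Subring (RatFunc K) :=
  Subring.closure
    ((algebraMap K (RatFunc K)) '' Set.range (algebraMap R K)
      ∪ {RatFunc.X, RatFunc.X⁻¹}
      ∪ {x | ∃ n : ℕ, 0 < n ∧ x = (RatFunc.X ^ n - 1)⁻¹})

namespace RouquierRingOver

variable {R K : Type*} [CommRing R] [Field K] [Algebra R K]

theorem toRatFunc_mem (p : R[X]) : toRatFunc R K p ∈ RouquierRingOver R K := by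
  induction p using Polynomial.induction_on' with
  | add p q hp hq => rw [map_add]; exact add_mem hp hq
  | monomial n a =>
    rw [← C_mul_X_pow_eq_monomial, map_mul, map_pow, toRatFunc_C, toRatFunc_X]
    exact mul_mem (Subring.subset_closure (.inl (.inl ⟨_, ⟨a, rfl⟩, rfl⟩)))
      (pow_mem (Subring.subset_closure (.inl (.inr (.inl rfl)))) n)

theorem inv_toRatFunc_mem {D : R[X]} (hD : D ∈ cyclotomicSubmonoid R) :
    (toRatFunc R K D)⁻¹ ∈ RouquierRingOver R K := by
  induction hD using Submonoid.closure_induction with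
  | mem D hD =>
    obtain rfl | ⟨n, hn, rfl⟩ := hD
    · rw [toRatFunc_X]
      exact Subring.subset_closure (.inl (.inr (.inr rfl)))
    · rw [toRatFunc_X_pow_sub_one]
      exact Subring.subset_closure (.inr ⟨n, hn, rfl⟩)
  | one => rw [map_one, inv_one]; exact one_mem _
  | mul D E _ _ hD hE => rw [map_mul, mul_inv]; exact mul_mem hD hE

theorem exists_eq_div {x : RatFunc K} (hx : x ∈ RouquierRingOver R K) :
    ∃ P, ∃ D ∈ cyclotomicSubmonoid R, x = toRatFunc R K P / toRatFunc R K D := by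
  induction hx using Subring.closure_induction with
  | mem x hx =>
    obtain (⟨_, ⟨a, rfl⟩, rfl⟩ | rfl | rfl) | ⟨n, hn, rfl⟩ := hx
    · exact ⟨C a, 1, one_mem _, by rw [map_one, div_one, toRatFunc_C]⟩
    · exact ⟨X, 1, one_mem _, by rw [map_one, div_one, toRatFunc_X]⟩
    · exact ⟨1, X, cyclotomicSubmonoid.X_mem, by rw [map_one, one_div, toRatFunc_X]⟩
    · exact ⟨1, X ^ n - 1, cyclotomicSubmonoid.X_pow_sub_one_mem hn, by
        rw [map_one, one_div, toRatFunc_X_pow_sub_one]⟩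
  | zero => exact ⟨0, 1, one_mem _, by rw [map_zero, zero_div]⟩
  | one => exact ⟨1, 1, one_mem _, by rw [map_one, div_one]⟩
  | add x y _ _ hx hy =>
    obtain ⟨P, D, hD, rfl⟩ := hx
    obtain ⟨Q, E, hE, rfl⟩ := hy
    refine ⟨P * E + D * Q, D * E, mul_mem hD hE, ?_⟩
    rw [map_add, map_mul, map_mul, map_mul, div_add_div _ _
      (toRatFunc_ne_zero_of_monic K (cyclotomicSubmonoid.monic hD))
      (toRatFunc_ne_zero_of_monic K (cyclotomicSubmonoid.monic hE))]
  | neg x _ hx =>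
    obtain ⟨P, D, hD, rfl⟩ := hx
    exact ⟨-P, D, hD, by rw [map_neg, neg_div]⟩
  | mul x y _ _ hx hy =>
    obtain ⟨P, D, hD, rfl⟩ := hx
    obtain ⟨Q, E, hE, rfl⟩ := hy
    exact ⟨P * Q, D * E, mul_mem hD hE, by rw [map_mul, map_mul, div_mul_div_comm]⟩

theorem exists_eq_unit_mul_monic_div [FaithfulSMul R K] {u v : RatFunc K}
    (hu : u ∈ RouquierRingOver R K) (hv : v ∈ RouquierRingOver R K) (huv : u * v = 1) :
    ∃ (w : R) (P D N : R[X]), IsUnit w ∧ P.Monic ∧ D.Monic ∧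
      N ∈ cyclotomicSubmonoid R ∧ P * D ∣ N ∧
      u = algebraMap K (RatFunc K) (algebraMap R K w) * (toRatFunc R K P / toRatFunc R K D) := by
  have : IsDomain R := (FaithfulSMul.algebraMap_injective R K).isDomain (algebraMap R K)
  obtain ⟨P, D, hD, rfl⟩ := exists_eq_div hu
  obtain ⟨Q, E, hE, rfl⟩ := exists_eq_div hv
  have hD' := cyclotomicSubmonoid.monic hD
  have hE' := cyclotomicSubmonoid.monic hE
  have hPQ : P * Q = D * E := toRatFunc_injective K <| by
    rwa [map_mul, map_mul, ← div_eq_one_iff_eq (mul_ne_zero (toRatFunc_ne_zero_of_monic K hD')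
      (toRatFunc_ne_zero_of_monic K hE')), ← div_mul_div_comm]
  obtain ⟨w, P, hw, hP, rfl⟩ :=
    exists_isUnit_C_mul_monic_of_dvd_monic (hD'.mul hE') (Dvd.intro Q hPQ)
  have hPDE : P ∣ D * E := hPQ ▸ (dvd_mul_left P (C w)).mul_right Q
  exact ⟨w, P, D, D * E * D, hw, hP, hD', mul_mem (mul_mem hD hE) hD, mul_dvd_mul_right hPDE D,
    by rw [map_mul, toRatFunc_C, mul_div_assoc]⟩

theorem algebraMap_mem_of_dvd_X_pow_sub_one [IsIntegrallyClosedIn R K] {n : ℕ} (hn : 0 < n)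
    {g : K[X]} (hg : g.Monic) (hgn : g ∣ X ^ n - 1) :
    algebraMap K[X] (RatFunc K) g ∈ RouquierRingOver R K := by
  have hmonic : (X ^ n - 1 : R[X]).Monic :=
    cyclotomicSubmonoid.monic (cyclotomicSubmonoid.X_pow_sub_one_mem hn)
  obtain ⟨g', rfl⟩ := exists_map_eq_of_monic_of_dvd_map (K := K) hmonic hg
    (by simpa only [Polynomial.map_sub, Polynomial.map_pow, map_X, Polynomial.map_one] using hgn)
  exact toRatFunc_mem g'

theorem inv_algebraMap_mem_of_dvd_X_pow_sub_one [IsIntegrallyClosedIn R K] {n : ℕ} (hn : 0 < n)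
    {g : K[X]} (hg : g.Monic) (hgn : g ∣ X ^ n - 1) :
    (algebraMap K[X] (RatFunc K) g)⁻¹ ∈ RouquierRingOver R K := by
  obtain ⟨h, hgh⟩ := hgn
  have hmonic : (X ^ n - 1 : K[X]).Monic :=
    cyclotomicSubmonoid.monic (cyclotomicSubmonoid.X_pow_sub_one_mem hn)
  have hh : h.Monic := hg.of_mul_monic_left (hgh ▸ hmonic)
  have hgh' : (RatFunc.X ^ n - 1 : RatFunc K) =
      algebraMap K[X] (RatFunc K) g * algebraMap K[X] (RatFunc K) h := by
    rw [← map_mul, ← hgh, map_sub, map_pow, RatFunc.algebraMap_X, map_one]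
  have inv_eq : (algebraMap K[X] (RatFunc K) g)⁻¹ =
      algebraMap K[X] (RatFunc K) h * (RatFunc.X ^ n - 1)⁻¹ := by
    rw [hgh', mul_inv_rev, mul_inv_cancel_left₀ (RatFunc.algebraMap_ne_zero hh.ne_zero)]
  rw [inv_eq]
  exact mul_mem (algebraMap_mem_of_dvd_X_pow_sub_one hn hh (Dvd.intro_left g hgh.symm))
    (Subring.subset_closure (.inr ⟨n, hn, rfl⟩))

theorem algebraMap_mul_zpow_mul_prod_zpow_mem [IsIntegrallyClosedIn R K] (w : R) (n : ℤ)
    {S : Finset K[X]} (hS : ∀ Φ ∈ S, IsKCyclotomic Φ) (e : K[X] → ℤ) :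
    algebraMap K (RatFunc K) (algebraMap R K w) * RatFunc.X ^ n *
      ∏ Φ ∈ S, algebraMap K[X] (RatFunc K) Φ ^ e Φ ∈ RouquierRingOver R K := by
  have hX : RatFunc.X ^ n ∈ RouquierRingOver R K := zpow_mem_of_mem_of_inv_mem
    (Subring.subset_closure (.inl (.inr (.inl rfl))))
    (Subring.subset_closure (.inl (.inr (.inr rfl)))) n
  refine mul_mem (mul_mem (toRatFunc_C K w ▸ toRatFunc_mem (C w)) hX) (prod_mem fun Φ hΦ ↦ ?_)
  obtain ⟨hmonic, -, m, hm, hdvd⟩ := hS Φ hΦ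
  exact zpow_mem_of_mem_of_inv_mem (algebraMap_mem_of_dvd_X_pow_sub_one hm hmonic hdvd)
    (inv_algebraMap_mem_of_dvd_X_pow_sub_one hm hmonic hdvd) (e Φ)

theorem inv_algebraMap_mul_zpow_mul_prod_zpow_mem [IsIntegrallyClosedIn R K] {w : R}
    (hw : IsUnit w) (n : ℤ) {S : Finset K[X]} (hS : ∀ Φ ∈ S, IsKCyclotomic Φ) (e : K[X] → ℤ) :
    (algebraMap K (RatFunc K) (algebraMap R K w) * RatFunc.X ^ n *
      ∏ Φ ∈ S, algebraMap K[X] (RatFunc K) Φ ^ e Φ)⁻¹ ∈ RouquierRingOver R K := by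
  obtain ⟨w, rfl⟩ := hw
  simpa only [mul_inv, ← Finset.prod_inv_distrib, ← zpow_neg, ← map_inv₀, map_units_inv]
    using algebraMap_mul_zpow_mul_prod_zpow_mem (R := R) ↑w⁻¹ (-n) hS fun Φ ↦ -e Φ

end RouquierRingOver

theorem rouquierRing_isUnit_iff_general (R : Type*) {K : Type*} [CommRing R] [Field K] [Algebra R K]
    [IsIntegrallyClosedIn R K] (u : RatFunc K) :
    (u ∈ RouquierRingOver R K ∧ ∃ v ∈ RouquierRingOver R K, u * v = 1) ↔
      ∃ (w : R) (_ : IsUnit w) (n : ℤ) (S : Finset K[X]) (e : K[X] → ℤ),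
        (∀ Φ ∈ S, IsKCyclotomic Φ) ∧
        u = algebraMap K (RatFunc K) (algebraMap R K w) *
            RatFunc.X ^ n * ∏ Φ ∈ S, algebraMap K[X] (RatFunc K) Φ ^ e Φ := by
  have : FaithfulSMul R K :=
    (faithfulSMul_iff_algebraMap_injective R K).mpr (IsIntegralClosure.algebraMap_injective R R K)
  constructor
  · rintro ⟨hu, v, hv, huv⟩
    obtain ⟨w, P, D, N, hw, hP, hD, hN, hPD, rfl⟩ :=
      RouquierRingOver.exists_eq_unit_mul_monic_div hu hv huv
    obtain ⟨n, S, e, hS, hprod⟩ := cyclotomicSubmonoid.exists_div_eq_X_zpow_mul_prod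
      (cyclotomicSubmonoid.map_mem (algebraMap R K) hN) (hP.map _) (hD.map _)
      (by simpa only [Polynomial.map_mul] using Polynomial.map_dvd (algebraMap R K) hPD)
    exact ⟨w, hw, n, S, e, hS, by rw [toRatFunc_apply, toRatFunc_apply, hprod, mul_assoc]⟩
  · rintro ⟨w, hw, n, S, e, hS, rfl⟩
    exact ⟨RouquierRingOver.algebraMap_mul_zpow_mul_prod_zpow_mem w n hS e, _,
      RouquierRingOver.inv_algebraMap_mul_zpow_mul_prod_zpow_mem hw n hS e,
      mul_inv_cancel₀ (algebraMap_mul_zpow_mul_prod_zpow_ne_zero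
        (hw.map (algebraMap R K)).ne_zero n (fun Φ hΦ ↦ (hS Φ hΦ).1.ne_zero) e)⟩

/-- Let `K` be a number field contained in `ℚ(μ_∞)`. The units of the Rouquier
ring `R_K(y)` are exactly the elements of the form `u · yⁿ · Π_Φ Φ(y)^{n_Φ}` with `u` a unit of
`Z_K`, `n ∈ ℤ`, `Φ` ranging over finitely many `K`-cyclotomic polynomials and `n_Φ ∈ ℤ`. -/
theorem rouquierRing_isUnit_iff (K : Type*) [Field K] [NumberField K]
    (hK : ∃ f : K →+* ℂ, ∀ x : K,
      f x ∈ Subfield.closure {z : ℂ | ∃ n : ℕ, 0 < n ∧ z ^ n = 1})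
    (u : RatFunc K) :
    (u ∈ RouquierRing K ∧ ∃ v ∈ RouquierRing K, u * v = 1) ↔
      ∃ (w : NumberField.RingOfIntegers K) (_ : IsUnit w) (n : ℤ)
        (S : Finset (Polynomial K)) (e : Polynomial K → ℤ),
        (∀ Φ ∈ S, IsKCyclotomic Φ) ∧
        u = algebraMap K (RatFunc K) (algebraMap (NumberField.RingOfIntegers K) K w) *
            RatFunc.X ^ n * ∏ Φ ∈ S, (algebraMap (Polynomial K) (RatFunc K) Φ) ^ (e Φ) :=
  rouquierRing_isUnit_iff_general (NumberField.RingOfIntegers K) u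
end

section
/- Let K be a number field contained in ℚ(μ_∞) with ring of integers Z_K. The Rouquier ring R_K(y) := Z_K[y, y^{-1}, (y^n − 1)^{-1}_{n ≥ 1}] is a Dedekind domain. -/
/-!
`R_K(y)` is the localization of `Z_K[y]` at the monoid generated by `y` and all `y ^ n - 1`, so it
is Noetherian and integrally closed. A maximal ideal of `Z_K[y]` has a finite residue field, where
the class of `y` is zero or a root of unity; hence it meets that monoid. Thus every chain of primes
of `R_K(y)` contracts to a chain of `Z_K[y]` which can be prolonged by a maximal ideal, and
`dim R_K(y) ≤ dim Z_K[y] - 1 = 1`.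
-/

open Polynomial

section FiniteResidueFields

lemma isJacobsonRing_of_dimensionLEOne {R : Type*} [CommRing R] [Ring.DimensionLEOne R]
    (h : (⊥ : Ideal R).jacobson = ⊥) : IsJacobsonRing R := by
  refine isJacobsonRing_iff_prime_eq.mpr fun P hP => ?_
  rcases eq_or_ne P ⊥ with rfl | hP0
  · exact h
  · have := hP.isMaximal hP0
    exact Ideal.jacobson_eq_self_of_isMaximal

lemma isJacobsonRing_int : IsJacobsonRing ℤ := by
  refine isJacobsonRing_of_dimensionLEOne (eq_bot_iff.mpr fun x hx => Ideal.mem_bot.mpr ?_)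
  have hunit : IsUnit (x * x + 1) := Ideal.mem_jacobson_bot.mp hx x
  rcases Int.isUnit_iff.mp hunit with h | h <;> nlinarith

lemma finite_of_module_finite_of_hasFiniteQuotients (R F : Type*) [CommRing R]
    [Ring.HasFiniteQuotients R] (hR : ¬IsField R) [Field F] [Algebra R F] [Module.Finite R F] :
    Finite F := by
  let I := RingHom.ker (algebraMap R F)
  have hI : I ≠ ⊥ := fun h =>
    hR (isField_of_isIntegral_of_isField ((RingHom.injective_iff_ker_eq_bot _).mpr h)
      (Field.toIsField F))
  have : Finite (R ⧸ I) := Ring.HasFiniteQuotients.finiteQuotient hI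
  let _ : Algebra (R ⧸ I) F := (RingHom.kerLift (algebraMap R F)).toAlgebra
  have : IsScalarTower R (R ⧸ I) F := .of_algebraMap_eq fun _ => rfl
  have : Module.Finite (R ⧸ I) F := .of_restrictScalars_finite R _ _
  exact Module.finite_of_finite (R ⧸ I)

lemma finite_of_finiteType_int (F : Type*) [Field F] [Algebra ℤ F] [Algebra.FiniteType ℤ F] :
    Finite F :=
  have := isJacobsonRing_int
  have := finite_of_finite_type_of_isJacobsonRing ℤ F
  finite_of_module_finite_of_hasFiniteQuotients ℤ F Int.not_isField

lemma exists_pow_sub_one_mem_of_notMem {B : Type*} [CommRing B] [Algebra ℤ B]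
    [Algebra.FiniteType ℤ B] {Q : Ideal B} [Q.IsMaximal] {x : B} (hx : x ∉ Q) :
    ∃ n : ℕ, 0 < n ∧ x ^ n - 1 ∈ Q := by
  let _ := Ideal.Quotient.field Q
  have : Finite (B ⧸ Q) := finite_of_finiteType_int _
  have hx0 : Ideal.Quotient.mk Q x ≠ 0 := mt Ideal.Quotient.eq_zero_iff_mem.mp hx
  have := Fintype.ofFinite (B ⧸ Q)
  refine ⟨Fintype.card (B ⧸ Q) - 1, Nat.sub_pos_of_lt Fintype.one_lt_card, ?_⟩
  rw [← Ideal.Quotient.eq_zero_iff_mem, map_sub, map_pow, map_one,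
    FiniteField.pow_card_sub_one_eq_one _ hx0, sub_self]

end FiniteResidueFields

section KrullDimension

lemma krullDim_add_one_le_of_strictMono {α β : Type*} [Preorder α] [Preorder β] (f : α → β)
    (hf : StrictMono f) (hlt : ∀ a, ∃ b, f a < b) : Order.krullDim α + 1 ≤ Order.krullDim β := by
  cases isEmpty_or_nonempty α
  · rw [Order.krullDim_eq_bot, WithBot.bot_add]
    exact bot_le
  rw [Order.krullDim_eq_iSup_length, ← WithBot.coe_one, ← WithBot.coe_add, ENat.iSup_add,
    WithBot.coe_iSup (OrderTop.bddAbove _)]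
  refine iSup_le fun p => ?_
  obtain ⟨b, hb⟩ := hlt p.last
  exact Order.LTSeries.length_le_krullDim ((p.map f hf).snoc b hb)

lemma ringKrullDim_add_one_le_of_isLocalization {R : Type*} (S : Type*) [CommRing R] [CommRing S]
    [Algebra R S] (M : Submonoid R) [IsLocalization M S]
    (hM : ∀ Q : Ideal R, Q.IsMaximal → ¬Disjoint (M : Set R) Q) :
    ringKrullDim S + 1 ≤ ringKrullDim R := by
  let f : PrimeSpectrum S → PrimeSpectrum R := PrimeSpectrum.comap (algebraMap R S)
  have hf : StrictMono f := fun p q hpq => (IsLocalization.orderEmbedding M S).lt_iff_lt.mpr hpq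
  refine krullDim_add_one_le_of_strictMono f hf fun p => ?_
  obtain ⟨Q, hQ, hpQ⟩ := (f p).asIdeal.exists_le_maximal (f p).isPrime.ne_top
  have hdisj : Disjoint (M : Set R) (f p).asIdeal :=
    ((IsLocalization.isPrime_iff_isPrime_disjoint M S p.asIdeal).mp p.isPrime).2
  have hne : (f p).asIdeal ≠ Q := fun h => hM Q hQ (h ▸ hdisj)
  have hle : f p ≤ ⟨Q, hQ.isPrime⟩ := hpQ
  exact ⟨⟨Q, hQ.isPrime⟩, lt_of_le_of_ne hle (mt (congrArg _) hne)⟩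

end KrullDimension

section AdjoinInverses

/-- The `B`-subalgebra of a field `L` obtained by adjoining the inverses of the elements of `T`. -/
def adjoinInverses {B : Type*} (L : Type*) [CommRing B] [Field L] [Algebra B L] (T : Set B) :
    Subalgebra B L :=
  Algebra.adjoin B ((fun t => (algebraMap B L t)⁻¹) '' T)

variable {B L : Type*} [CommRing B] [Field L] [Algebra B L] {T : Set B}

lemma inv_algebraMap_mem_adjoinInverses {t : B} (ht : t ∈ T) :
    (algebraMap B L t)⁻¹ ∈ adjoinInverses L T :=
  Algebra.subset_adjoin ⟨t, ht, rfl⟩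

variable [FaithfulSMul B L]

lemma algebraMap_mul_inv_cancel_of_mem (h0 : (0 : B) ∉ T) {t : B} (ht : t ∈ T) :
    algebraMap B L t * (algebraMap B L t)⁻¹ = 1 :=
  mul_inv_cancel₀ ((FaithfulSMul.algebraMap_eq_zero_iff B L).not.mpr (ne_of_mem_of_not_mem ht h0))

lemma isUnit_algebraMap_adjoinInverses (h0 : (0 : B) ∉ T) {s : B} (hs : s ∈ Submonoid.closure T) :
    IsUnit (algebraMap B (adjoinInverses L T) s) := by
  suffices Submonoid.closure T ≤
      (IsUnit.submonoid (adjoinInverses L T)).comap (algebraMap B (adjoinInverses L T)) from this hs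
  exact Submonoid.closure_le.mpr fun t ht => .of_mul_eq_one
    ⟨_, inv_algebraMap_mem_adjoinInverses ht⟩ (Subtype.ext (algebraMap_mul_inv_cancel_of_mem h0 ht))

lemma exists_mul_algebraMap_eq_of_mem_adjoinInverses (h0 : (0 : B) ∉ T) {z : L}
    (hz : z ∈ adjoinInverses L T) :
    ∃ b, ∃ s ∈ Submonoid.closure T, z * algebraMap B L s = algebraMap B L b := by
  induction hz using Algebra.adjoin_induction with
  | mem x hx =>
    obtain ⟨t, ht, rfl⟩ := hx
    exact ⟨1, t, Submonoid.subset_closure ht, by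
      rw [map_one, mul_comm, algebraMap_mul_inv_cancel_of_mem h0 ht]⟩
  | algebraMap b => exact ⟨b, 1, one_mem _, by rw [map_one, mul_one]⟩
  | add x y _ _ hx hy =>
    obtain ⟨b, s, hs, hxs⟩ := hx
    obtain ⟨c, t, ht, hyt⟩ := hy
    exact ⟨b * t + c * s, s * t, mul_mem hs ht, by simp only [map_mul, map_add, ← hxs, ← hyt]; ring⟩
  | mul x y _ _ hx hy =>
    obtain ⟨b, s, hs, hxs⟩ := hx
    obtain ⟨c, t, ht, hyt⟩ := hy
    exact ⟨b * c, s * t, mul_mem hs ht, by simp only [map_mul, ← hxs, ← hyt]; ring⟩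

lemma isLocalization_adjoinInverses (h0 : (0 : B) ∉ T) :
    IsLocalization (Submonoid.closure T) (adjoinInverses L T) where
  map_units s := isUnit_algebraMap_adjoinInverses h0 s.2
  surj z :=
    have ⟨b, s, hs, h⟩ := exists_mul_algebraMap_eq_of_mem_adjoinInverses h0 z.2
    ⟨(b, ⟨s, hs⟩), Subtype.ext h⟩
  exists_of_eq h :=
    ⟨1, congrArg _ (FaithfulSMul.algebraMap_injective B L (congrArg Subtype.val h))⟩

end AdjoinInverses

section RouquierDenominators

/-- The polynomials `y` and `y ^ n - 1`, `n ≥ 1`, which become invertible in the Rouquier ring;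
the ring `A` plays the role of `Z_K`. -/
def rouquierDenominators (A : Type*) [CommRing A] : Set A[X] :=
  insert X {p | ∃ n : ℕ, 0 < n ∧ p = X ^ n - 1}

variable {A : Type*} [CommRing A]

lemma monic_of_mem_rouquierDenominators {p : A[X]} (hp : p ∈ rouquierDenominators A) :
    p.Monic := by
  rcases hp with rfl | ⟨n, hn, rfl⟩
  · exact monic_X
  · exact monic_X_pow_sub_C 1 hn.ne'

lemma closure_rouquierDenominators_le_nonZeroDivisors :
    Submonoid.closure (rouquierDenominators A) ≤ nonZeroDivisors A[X] :=
  Submonoid.closure_le.mpr fun _ hp => (monic_of_mem_rouquierDenominators hp).mem_nonZeroDivisors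

lemma not_disjoint_closure_rouquierDenominators [Algebra.FiniteType ℤ A] (Q : Ideal A[X])
    [Q.IsMaximal] : ¬Disjoint (Submonoid.closure (rouquierDenominators A) : Set A[X]) Q := by
  have : Algebra.FiniteType ℤ A[X] := .trans (S := A) inferInstance inferInstance
  suffices ∃ p ∈ rouquierDenominators A, p ∈ Q from
    have ⟨p, hp, hpQ⟩ := this
    Set.not_disjoint_iff.mpr ⟨p, Submonoid.subset_closure hp, hpQ⟩
  by_cases hX : X ∈ Q
  · exact ⟨X, .inl rfl, hX⟩
  · obtain ⟨n, hn, h⟩ := exists_pow_sub_one_mem_of_notMem hX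
    exact ⟨X ^ n - 1, .inr ⟨n, hn, rfl⟩, h⟩

variable (A) (S : Type*) [CommRing S] [Algebra A[X] S]
  [IsLocalization (Submonoid.closure (rouquierDenominators A)) S]

lemma ringKrullDim_le_of_isLocalization_rouquierDenominators [Algebra.FiniteType ℤ A] :
    ringKrullDim S ≤ ringKrullDim A := by
  have : IsNoetherianRing A := Algebra.FiniteType.isNoetherianRing ℤ A
  have h : ringKrullDim S + 1 ≤ ringKrullDim A[X] :=
    ringKrullDim_add_one_le_of_isLocalization S _ fun Q _ =>
      not_disjoint_closure_rouquierDenominators Q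
  rwa [ringKrullDim_of_isNoetherianRing, ENat.WithBot.add_le_add_one_right_iff] at h

theorem isDedekindDomain_of_isLocalization_rouquierDenominators [IsDedekindDomain A]
    [Algebra.FiniteType ℤ A] : IsDedekindDomain S := by
  have hM := closure_rouquierDenominators_le_nonZeroDivisors (A := A)
  have : IsDomain S := IsLocalization.isDomain_of_le_nonZeroDivisors S hM
  have : IsNoetherianRing S :=
    IsLocalization.isNoetherianRing (Submonoid.closure (rouquierDenominators A)) S inferInstance
  have : IsIntegrallyClosed S := isIntegrallyClosed_of_isLocalization S _ hM
  have : Ring.KrullDimLE 1 S := Ring.krullDimLE_iff.mpr <|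
    (ringKrullDim_le_of_isLocalization_rouquierDenominators A S).trans
      (Ring.krullDimLE_iff.mp inferInstance)
  have : Ring.DimensionLEOne S := ⟨fun hp0 hp => hp.isMaximal_of_ne_bot hp0⟩
  exact { }

end RouquierDenominators

section RatFunc

attribute [local instance] Polynomial.algebra

lemma faithfulSMul_polynomial_ratFunc (A K : Type*) [CommRing A] [Field K] [Algebra A K]
    [FaithfulSMul A K] : FaithfulSMul A[X] (RatFunc K) :=
  (faithfulSMul_iff_algebraMap_injective ..).mpr <|
    (RatFunc.algebraMap_injective K).comp
      (map_injective _ (FaithfulSMul.algebraMap_injective A K))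

lemma algebraMap_polynomial_ratFunc_C {A K : Type*} [CommRing A] [Field K] [Algebra A K] (a : A) :
    algebraMap A[X] (RatFunc K) (C a) = algebraMap K (RatFunc K) (algebraMap A K a) :=
  congrArg (algebraMap K[X] (RatFunc K)) (map_C _)

lemma algebraMap_polynomial_ratFunc_X {A K : Type*} [CommRing A] [Field K] [Algebra A K] :
    algebraMap A[X] (RatFunc K) X = RatFunc.X :=
  congrArg (algebraMap K[X] (RatFunc K)) (map_X _)

open NumberField

variable (K : Type*) [Field K] [NumberField K]

lemma algebraMap_mem_rouquierRing (f : (𝓞 K)[X]) :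
    algebraMap (𝓞 K)[X] (RatFunc K) f ∈ RouquierRing K := by
  induction f using Polynomial.induction_on' with
  | add p q hp hq => rw [map_add]; exact add_mem hp hq
  | monomial n a =>
    have hC : algebraMap (𝓞 K)[X] (RatFunc K) (C a) ∈ RouquierRing K :=
      Subring.subset_closure (.inl (.inl ⟨_, ⟨a, rfl⟩, (algebraMap_polynomial_ratFunc_C a).symm⟩))
    have hX : algebraMap (𝓞 K)[X] (RatFunc K) X ∈ RouquierRing K :=
      Subring.subset_closure (.inl (.inr (.inl algebraMap_polynomial_ratFunc_X)))
    rw [← C_mul_X_pow_eq_monomial, map_mul, map_pow]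
    exact mul_mem hC (pow_mem hX n)

lemma rouquierRing_eq_adjoinInverses :
    RouquierRing K = (adjoinInverses (RatFunc K) (rouquierDenominators (𝓞 K))).toSubring := by
  apply le_antisymm
  · refine Subring.closure_le.mpr ?_
    rintro _ ((⟨_, ⟨a, rfl⟩, rfl⟩ | rfl | rfl) | ⟨n, hn, rfl⟩)
    · rw [← algebraMap_polynomial_ratFunc_C]
      exact Subalgebra.algebraMap_mem _ _
    · rw [← algebraMap_polynomial_ratFunc_X (A := 𝓞 K)]
      exact Subalgebra.algebraMap_mem _ _
    · rw [← algebraMap_polynomial_ratFunc_X (A := 𝓞 K)]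
      exact inv_algebraMap_mem_adjoinInverses (.inl rfl)
    · rw [← algebraMap_polynomial_ratFunc_X (A := 𝓞 K),
        ← map_one (algebraMap (𝓞 K)[X] (RatFunc K)), ← map_pow, ← map_sub]
      exact inv_algebraMap_mem_adjoinInverses (.inr ⟨n, hn, rfl⟩)
  · rw [adjoinInverses, Algebra.adjoin_eq_ring_closure, Subring.closure_le]
    rintro _ (⟨f, rfl⟩ | ⟨_, rfl | ⟨n, hn, rfl⟩, rfl⟩)
    · exact algebraMap_mem_rouquierRing K f
    · exact Subring.subset_closure (.inl (.inr (.inr (congrArg _ algebraMap_polynomial_ratFunc_X))))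
    · exact Subring.subset_closure (.inr ⟨n, hn, by simp [algebraMap_polynomial_ratFunc_X]⟩)

theorem rouquierRing_isDedekindDomain_general : IsDedekindDomain (RouquierRing K) := by
  have := faithfulSMul_polynomial_ratFunc (𝓞 K) K
  have h0 : (0 : (𝓞 K)[X]) ∉ rouquierDenominators (𝓞 K) := fun h =>
    (monic_of_mem_rouquierDenominators h).ne_zero rfl
  have := isLocalization_adjoinInverses (L := RatFunc K) h0
  rw [rouquierRing_eq_adjoinInverses]
  exact isDedekindDomain_of_isLocalization_rouquierDenominators (𝓞 K)
    (adjoinInverses (RatFunc K) (rouquierDenominators (𝓞 K)))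

end RatFunc

/-- Let `K ⊆ ℚ(μ_∞)` be a number field with ring of integers `Z_K`. The
Rouquier ring `R_K(y) = Z_K[y, y^{-1}, (y^n − 1)^{-1}_{n ≥ 1}]` is a Dedekind domain. -/
theorem rouquierRing_isDedekindDomain (K : Type*) [Field K] [NumberField K]
    (hK : ∃ f : K →+* ℂ, ∀ x : K,
      f x ∈ Subfield.closure {z : ℂ | ∃ n : ℕ, 0 < n ∧ z ^ n = 1}) :
    IsDedekindDomain (RouquierRing K) :=
  rouquierRing_isDedekindDomain_general K
end

section
/- Let K be a number field with ring of integers Z_K, let A := Z_K[v_1^{±1}, …, v_m^{±1}] be the Laurent polynomial ring in m variables over Z_K, let a = (a_1, …, a_m) ∈ ℤ^m with gcd(a_1, …, a_m) = 1, set M := v_1^{a_1} ⋯ v_m^{a_m}, and let p be a nonzero prime ideal of Z_K. Then the ideal q_M := (M − 1)·A + p·A of A is a prime ideal. -/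
open scoped TensorProduct

/-!
Reducing coefficients modulo `p` and exponents modulo `ℤa` maps `A` to `(Z_K / p)[ℤ^m / ℤa]`, with
kernel `q_M`. A Bézout relation `∑ bᵢ aᵢ = 1` makes `x ↦ x - (∑ bᵢ xᵢ) a` an endomorphism of `ℤ^m`
with kernel exactly `ℤa`; using it in place of the quotient map, the target becomes the Laurent
polynomial ring `(Z_K / p)[ℤ^m]`, which is a domain.
-/

section GroupAlgebra

open AddMonoidAlgebra

variable {R S G N : Type*}

section Ring

variable [Ring R] [Ring S] [AddGroup G] [AddMonoid N]

variable (R) in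
/-- The augmentation ideal of `R[G]` relative to a subgroup `H`, as a left ideal: it is generated by
the differences `single h 1 - 1` with `h ∈ H`. For normal `H` it is the kernel of `R[G] → R[G/H]`;
for `H = G` it is the usual augmentation ideal. -/
noncomputable def relAugmentationIdeal (H : AddSubgroup G) : Ideal R[G] :=
  Ideal.span ((fun h ↦ single h 1 - 1) '' H)

theorem single_sub_one_mem_relAugmentationIdeal {H : AddSubgroup G} {h : G} (hh : h ∈ H) :
    single h 1 - 1 ∈ relAugmentationIdeal R H :=
  Ideal.subset_span (Set.mem_image_of_mem _ hh)

theorem single_sub_single_mem_relAugmentationIdeal {H : AddSubgroup G} {g g' : G}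
    (h : -g' + g ∈ H) (r : R) : single g r - single g' r ∈ relAugmentationIdeal R H := by
  have factorization : single g r - single g' r = single g' r * (single (-g' + g) 1 - 1) := by
    simp [mul_sub, single_mul_single]
  rw [factorization]
  exact Ideal.mul_mem_left _ _ (single_sub_one_mem_relAugmentationIdeal h)

theorem single_sub_one_mem_of_mem_closure {I : Ideal R[G]} {s : Set G}
    (hs : ∀ g ∈ s, single g 1 - 1 ∈ I) {g : G} (hg : g ∈ AddSubgroup.closure s) :
    single g 1 - 1 ∈ I := by
  induction hg using AddSubgroup.closure_induction with
  | mem g hg => exact hs g hg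
  | zero => simp [← one_def]
  | add g h _ _ ihg ihh =>
    have telescope : (single (g + h) 1 - 1 : R[G]) =
        single g 1 * (single h 1 - 1) + (single g 1 - 1) := by
      simp [mul_sub, single_mul_single]
    rw [telescope]
    exact I.add_mem (I.mul_mem_left _ ihh) ihg
  | neg g _ ih =>
    have factorization : (single (-g) 1 - 1 : R[G]) = -single (-g) 1 * (single g 1 - 1) := by
      simp [mul_sub, single_mul_single, ← one_def, neg_add_eq_sub]
    rw [factorization]
    exact I.mul_mem_left _ ih

theorem relAugmentationIdeal_closure (s : Set G) :
    relAugmentationIdeal R (AddSubgroup.closure s) =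
      Ideal.span ((fun g ↦ single g 1 - 1) '' s) := by
  apply le_antisymm
  · rw [relAugmentationIdeal, Ideal.span_le]
    rintro _ ⟨g, hg, rfl⟩
    rw [SetLike.mem_coe]
    refine single_sub_one_mem_of_mem_closure (fun h hh ↦ ?_) hg
    exact Ideal.subset_span (Set.mem_image_of_mem (fun g ↦ single g 1 - 1) hh)
  · exact Ideal.span_mono (Set.image_mono AddSubgroup.subset_closure)

theorem relAugmentationIdeal_zmultiples (a : G) :
    relAugmentationIdeal R (AddSubgroup.zmultiples a) = Ideal.span {single a 1 - 1} := by
  rw [AddSubgroup.zmultiples_eq_closure, relAugmentationIdeal_closure, Set.image_singleton]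

theorem map_mapRingHom_relAugmentationIdeal (φ : R →+* S) (H : AddSubgroup G) :
    (relAugmentationIdeal R H).map (mapRingHom G φ) = relAugmentationIdeal S H := by
  simp [relAugmentationIdeal, Ideal.map_span, Set.image_image]

theorem ker_mapDomainRingHom (f : G →+ N) :
    RingHom.ker (mapDomainRingHom R f) = relAugmentationIdeal R f.ker := by
  apply le_antisymm
  · intro x hx
    have hx : mapDomain f x = 0 := hx
    -- `Function.invFun f` picks a representative of each fibre of `f`; moving every exponent of
    -- `x` to the representative of its fibre changes `x` by an element of the ideal.
    have sub_mem (y : R[G]) :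
        y - mapDomain (Function.invFun f) (mapDomain f y) ∈ relAugmentationIdeal R f.ker := by
      induction y using AddMonoidAlgebra.induction_linear with
      | zero => simp
      | add y z hy hz =>
        simpa only [mapDomain_add, add_sub_add_comm] using Ideal.add_mem _ hy hz
      | single g r =>
        have same_fibre : f (Function.invFun f (f g)) = f g := Function.invFun_eq ⟨g, rfl⟩
        simp only [mapDomain_single]
        exact single_sub_single_mem_relAugmentationIdeal (f.eq_iff.mp same_fibre.symm) r
    simpa [hx] using sub_mem x
  · rw [relAugmentationIdeal, Ideal.span_le]
    rintro _ ⟨g, hg, rfl⟩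
    have single_eq_one : mapDomainRingHom R f (single g 1) = 1 := by
      rw [mapDomainRingHom_apply, mapDomain_single, AddMonoidHom.mem_ker.mp hg, one_def]
    rw [SetLike.mem_coe, RingHom.mem_ker, map_sub, single_eq_one, map_one, sub_self]

end Ring

theorem ker_mapRingHom_eq_map_algebraMap [CommRing R] [Ring S] [AddMonoid N] (φ : R →+* S) :
    RingHom.ker (mapRingHom N φ) = (RingHom.ker φ).map (algebraMap R R[N]) := by
  apply le_antisymm
  · intro x hx
    have coeff_mem (n : N) : x.coeff n ∈ RingHom.ker φ := by
      rw [RingHom.mem_ker, ← coeff_mapRingHom, RingHom.mem_ker.mp hx, coeff_zero,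
        Finsupp.zero_apply]
    rw [← sum_coeff_single x]
    refine Ideal.sum_mem _ fun n _ ↦ ?_
    have single_eq : single n (x.coeff n) = single n 1 * algebraMap R R[N] (x.coeff n) := by
      simp
    rw [single_eq]
    exact Ideal.mul_mem_left _ _ (Ideal.mem_map_of_mem _ (coeff_mem n))
  · rw [Ideal.map_le_iff_le_comap]
    intro r hr
    simp [RingHom.mem_ker, RingHom.mem_ker.mp hr]

theorem ker_mapDomainRingHom_comp_mapRingHom [CommRing R] [Ring S] [AddGroup G] [AddMonoid N]
    {φ : R →+* S} (hφ : Function.Surjective φ) (f : G →+ N) :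
    RingHom.ker ((mapDomainRingHom S f).comp (mapRingHom G φ)) =
      relAugmentationIdeal R f.ker ⊔ (RingHom.ker φ).map (algebraMap R R[G]) := by
  have surjective : Function.Surjective (mapRingHom G φ) := map_surjective (φ : R →+ S) hφ
  rw [← RingHom.comap_ker, ker_mapDomainRingHom, ← map_mapRingHom_relAugmentationIdeal φ,
    Ideal.comap_map_of_surjective _ surjective, ← RingHom.ker_eq_comap_bot,
    ker_mapRingHom_eq_map_algebraMap]

theorem isPrime_relAugmentationIdeal_ker_sup_map [CommRing R] [AddGroup G] [AddMonoid N]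
    [UniqueSums N] (f : G →+ N) (p : Ideal R) [p.IsPrime] :
    (relAugmentationIdeal R f.ker ⊔ p.map (algebraMap R R[G])).IsPrime := by
  rw [← p.mk_ker, ← ker_mapDomainRingHom_comp_mapRingHom Ideal.Quotient.mk_surjective f]
  exact RingHom.ker_isPrime _

theorem ker_id_sub_zmultiplesHom_comp [AddCommGroup G] {a : G} {φ : G →+ ℤ} (hφ : φ a = 1) :
    (AddMonoidHom.id G - (zmultiplesHom G a).comp φ).ker = AddSubgroup.zmultiples a := by
  ext x
  simp only [AddMonoidHom.mem_ker, AddMonoidHom.sub_apply, AddMonoidHom.id_apply,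
    AddMonoidHom.comp_apply, zmultiplesHom_apply, sub_eq_zero, AddSubgroup.mem_zmultiples_iff]
  constructor
  · intro hx
    exact ⟨φ x, hx.symm⟩
  · rintro ⟨k, rfl⟩
    simp [hφ]

theorem isPrime_span_single_sub_one_sup_map [CommRing R] [AddCommGroup G] [UniqueSums G]
    {a : G} {φ : G →+ ℤ} (hφ : φ a = 1) (p : Ideal R) [p.IsPrime] :
    (Ideal.span {single a 1 - 1} ⊔ p.map (algebraMap R R[G])).IsPrime := by
  rw [← relAugmentationIdeal_zmultiples, ← ker_id_sub_zmultiplesHom_comp hφ]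
  exact isPrime_relAugmentationIdeal_ker_sup_map _ p

end GroupAlgebra

theorem exists_addMonoidHom_apply_eq_gcd {ι : Type*} [Fintype ι] (a : ι → ℤ) :
    ∃ φ : (ι → ℤ) →+ ℤ, φ a = Finset.univ.gcd a := by
  obtain ⟨b, hb⟩ := Finset.gcd_eq_sum_mul Finset.univ a
  refine ⟨∑ i, b i • Pi.evalAddMonoidHom (fun _ ↦ ℤ) i, ?_⟩
  simp [hb, mul_comm]

theorem laurent_essential_ideal_isPrime_general {R ι : Type*} [CommRing R] [Fintype ι]
    (a : ι → ℤ) (ha : Finset.univ.gcd a = 1) (p : Ideal R) [p.IsPrime] :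
    (Ideal.span {(AddMonoidAlgebra.single a 1 : AddMonoidAlgebra R (ι → ℤ)) - 1} ⊔
      p.map (algebraMap R (AddMonoidAlgebra R (ι → ℤ)))).IsPrime := by
  obtain ⟨φ, hφ⟩ := exists_addMonoidHom_apply_eq_gcd a
  exact isPrime_span_single_sub_one_sup_map (hφ.trans ha) p

/-- Let `K` be a number field with ring of integers `Z_K`, let
`A := Z_K[v₁^{±1}, …, v_m^{±1}]` be the Laurent polynomial ring in `m` variables over `Z_K`
(realized as the monoid algebra of `ℤ^m` over `Z_K`), let `a ∈ ℤ^m` with `gcd(a₁, …, a_m) = 1`,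
let `M := v₁^{a₁} ⋯ v_m^{a_m}` be the corresponding monomial, and let `p` be a nonzero prime
ideal of `Z_K`. Then the ideal `q_M := (M - 1)·A + p·A` is prime. -/
theorem laurent_essential_ideal_isPrime
    (K : Type*) [Field K] [NumberField K] (m : ℕ) (a : Fin m → ℤ)
    (ha : Finset.univ.gcd a = 1)
    (p : Ideal (NumberField.RingOfIntegers K)) (hp0 : p ≠ ⊥) (hp : p.IsPrime) :
    (Ideal.span {(AddMonoidAlgebra.single a 1 :
          AddMonoidAlgebra (NumberField.RingOfIntegers K) (Fin m → ℤ)) - 1} ⊔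
      Ideal.map (algebraMap (NumberField.RingOfIntegers K)
          (AddMonoidAlgebra (NumberField.RingOfIntegers K) (Fin m → ℤ))) p).IsPrime :=
  laurent_essential_ideal_isPrime_general a ha p
end

section
/- Let G be a finite group. The only idempotents of the center of the integral group ring ℤ[G] are 0 and 1; that is, 1 is the unique block-idempotent of ℤ[G]. -/
/-!
Let `R` be a domain of characteristic zero. Multiplication by an idempotent `e` on `R[G]` is a
projection, so its trace is its rank over the field of fractions. In the basis `G` every diagonal
entry of this projection is the coefficient `e₁` of `e` at `1`, so `|G| e₁` is a natural number.
When no prime factor of `|G|` is invertible in `R`, this forces `e₁` itself to be a natural number.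
The same holds for `1 - e`, whose coefficient at `1` is `1 - e₁`, so one of the two coefficients
is `0`. The corresponding projection has rank `0`, hence vanishes.
-/

open LinearMap

section IdempotentEndomorphism

theorem trace_eq_finrank_range_of_isIdempotentElem {K V : Type*} [Field K] [AddCommGroup V]
    [Module K V] [FiniteDimensional K V] {f : Module.End K V} (hf : IsIdempotentElem f) :
    trace K V f = Module.finrank K (range f) :=
  (IsIdempotentElem.isProj_range f hf).trace

variable {R M : Type*} [CommRing R] [AddCommGroup M] [Module R M]
  [Module.Free R M] [Module.Finite R M] {f : Module.End R M}

theorem algebraMap_trace_eq_finrank_range_baseChange (K : Type*) [Field K] [Algebra R K]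
    (hf : IsIdempotentElem f) :
    algebraMap R K (trace R M f) = Module.finrank K (range (f.baseChange K)) := by
  have hfK : IsIdempotentElem (f.baseChange K) := hf.map (Module.End.baseChangeHom R K M)
  rw [← trace_baseChange, trace_eq_finrank_range_of_isIdempotentElem hfK]

variable [IsDomain R]

theorem exists_trace_eq_natCast_of_isIdempotentElem (hf : IsIdempotentElem f) :
    ∃ r : ℕ, trace R M f = r := by
  let K := FractionRing R
  refine ⟨Module.finrank K (range (f.baseChange K)), FaithfulSMul.algebraMap_injective R K ?_⟩
  rw [algebraMap_trace_eq_finrank_range_baseChange K hf, map_natCast]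

theorem trace_eq_zero_iff_of_isIdempotentElem [CharZero R] (hf : IsIdempotentElem f) :
    trace R M f = 0 ↔ f = 0 := by
  let K := FractionRing R
  calc trace R M f = 0
    _ ↔ Module.finrank K (range (f.baseChange K)) = 0 := by
      rw [← Nat.cast_eq_zero (R := K), ← algebraMap_trace_eq_finrank_range_baseChange K hf,
        FaithfulSMul.algebraMap_eq_zero_iff]
    _ ↔ f.baseChange K = 0 := by rw [Submodule.finrank_eq_zero, range_eq_bot]
    _ ↔ f = 0 := map_eq_zero_iff _ (baseChangeHom_injective R M K)

end IdempotentEndomorphism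

theorem dvd_of_natCast_dvd_natCast {R : Type*} [CommRing R] [IsDomain R] [CharZero R] {n r : ℕ}
    (hn : ∀ p : ℕ, p.Prime → p ∣ n → ¬ IsUnit (p : R)) (h : (n : R) ∣ r) : n ∣ r := by
  induction n using induction_on_primes generalizing r with
  | zero => simpa using h
  | one => exact one_dvd r
  | prime_mul p m hp ih =>
    have hpR : (p : R) ∣ r := (Nat.cast_dvd_cast (dvd_mul_right p m)).trans h
    have hpr : p ∣ r := by
      by_contra hpr
      have hcop : IsCoprime (p : R) r := ((Nat.Prime.coprime_iff_not_dvd hp).2 hpr).cast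
      exact hn p hp (dvd_mul_right p m) (hcop.isUnit_of_dvd hpR)
    obtain ⟨s, rfl⟩ := hpr
    rw [Nat.cast_mul, Nat.cast_mul] at h
    have hms : (m : R) ∣ s := (mul_dvd_mul_iff_left (Nat.cast_ne_zero.2 hp.ne_zero)).1 h
    exact mul_dvd_mul_left p (ih (fun q hq hqm ↦ hn q hq (hqm.mul_left p)) hms)

section GroupRing

variable {R G : Type*} [CommRing R] [Group G] [Finite G]

theorem trace_lmul_monoidAlgebra_eq_card_mul_coeff_one (e : MonoidAlgebra R G) :
    trace R _ (Algebra.lmul R (MonoidAlgebra R G) e) = Nat.card G * e.coeff 1 := by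
  classical
  have := Fintype.ofFinite G
  let b := MonoidAlgebra.basis G R
  have hdiag (g : G) : toMatrix b b (Algebra.lmul R _ e) g g = e.coeff 1 := by
    rw [toMatrix_apply]
    simp [b, MonoidAlgebra.basis]
  rw [trace_eq_matrix_trace R b, Matrix.trace]
  simp only [Matrix.diag_apply, hdiag, Finset.sum_const, Finset.card_univ, nsmul_eq_mul,
    Nat.card_eq_fintype_card]

variable [IsDomain R] [CharZero R] {e : MonoidAlgebra R G}

theorem coeff_one_eq_zero_iff_of_isIdempotentElem (he : IsIdempotentElem e) :
    e.coeff 1 = 0 ↔ e = 0 := by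
  have hcard : (Nat.card G : R) ≠ 0 := Nat.cast_ne_zero.2 Nat.card_pos.ne'
  calc e.coeff 1 = 0
    _ ↔ trace R _ (Algebra.lmul R (MonoidAlgebra R G) e) = 0 := by
      rw [trace_lmul_monoidAlgebra_eq_card_mul_coeff_one, mul_eq_zero_iff_left hcard]
    _ ↔ Algebra.lmul R _ e = 0 :=
      trace_eq_zero_iff_of_isIdempotentElem (he.map (Algebra.lmul R _))
    _ ↔ e = 0 := map_eq_zero_iff _ Algebra.lmul_injective

theorem exists_coeff_one_eq_natCast_of_isIdempotentElem
    (hG : ∀ p : ℕ, p.Prime → p ∣ Nat.card G → ¬ IsUnit (p : R)) (he : IsIdempotentElem e) :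
    ∃ m : ℕ, e.coeff 1 = m := by
  have hcard : (Nat.card G : R) ≠ 0 := Nat.cast_ne_zero.2 Nat.card_pos.ne'
  obtain ⟨r, hr⟩ := exists_trace_eq_natCast_of_isIdempotentElem (he.map (Algebra.lmul R _))
  rw [trace_lmul_monoidAlgebra_eq_card_mul_coeff_one] at hr
  obtain ⟨m, rfl⟩ := dvd_of_natCast_dvd_natCast hG ⟨_, hr.symm⟩
  exact ⟨m, mul_left_cancel₀ hcard (hr.trans (Nat.cast_mul _ _))⟩

end GroupRing

theorem center_idempotent_eq_zero_or_one_of_intGroupRing_general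
    {R G : Type*} [CommRing R] [IsDomain R] [CharZero R] [Group G] [Finite G]
    (hG : ∀ p : ℕ, p.Prime → p ∣ Nat.card G → ¬ IsUnit (p : R))
    {e : MonoidAlgebra R G} (he : IsIdempotentElem e) : e = 0 ∨ e = 1 := by
  obtain ⟨m, hm⟩ := exists_coeff_one_eq_natCast_of_isIdempotentElem hG he
  obtain ⟨n, hn⟩ := exists_coeff_one_eq_natCast_of_isIdempotentElem hG he.one_sub
  have hsum : e.coeff 1 + (1 - e).coeff 1 = 1 := by simp
  rw [hm, hn] at hsum
  have hmn : m + n = 1 := mod_cast hsum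
  obtain rfl | rfl : m = 0 ∨ n = 0 := by lia
  · rw [Nat.cast_zero, coeff_one_eq_zero_iff_of_isIdempotentElem he] at hm
    exact .inl hm
  · rw [Nat.cast_zero, coeff_one_eq_zero_iff_of_isIdempotentElem he.one_sub] at hn
    exact .inr (sub_eq_zero.1 hn).symm

/-- Let `G` be a finite group. The only idempotents of the center of the
integral group ring `ℤ[G]` are `0` and `1`; that is, `1` is the unique block-idempotent
of `ℤ[G]`. -/
theorem center_idempotent_eq_zero_or_one_of_intGroupRing
    (G : Type*) [Group G] [Finite G] (e : MonoidAlgebra ℤ G)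
    (he : e ∈ Subring.center (MonoidAlgebra ℤ G)) (hidem : IsIdempotentElem e) :
    e = 0 ∨ e = 1 :=
  center_idempotent_eq_zero_or_one_of_intGroupRing_general
    (fun _ hp _ ↦ (Nat.prime_iff_prime_int.1 hp).not_isUnit) hidem
end

section
/- Let d ≥ 1, let m = (m^{(0)}, …, m^{(d−1)}) ∈ ℤ^d be a weight system, and let λ, μ be d-partitions of r. If the m-charged contents of λ and μ are equal as multisets, Contc_λ = Contc_μ, then the m-charged heights of λ and μ are equal, hc_λ = hc_μ. -/
/-- The β-number of a partition `λ = (λ₁ ≥ … ≥ λ_h)` (given as a list), namely the list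
`(λ₁ + h - 1, λ₂ + h - 2, …, λ_h + h - h)`. -/
def betaNumber (l : List ℕ) : List ℕ :=
  l.mapIdx fun i a => a + l.length - (i + 1)

/-- The `m`-shifted sequence `β[m] = (β₁ + m, …, β_h + m, m - 1, m - 2, …, 1, 0)`. -/
def shiftedBeta (β : List ℕ) (m : ℕ) : List ℕ :=
  β.map (· + m) ++ (List.range m).reverse

/-- A list of natural numbers is a partition if it is weakly decreasing and its entries are
positive. -/
def IsPartitionList (l : List ℕ) : Prop :=
  l.Pairwise (· ≥ ·) ∧ ∀ x ∈ l, 0 < x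

/-- A `d`-partition of `r`: a `d`-tuple of partitions whose sizes sum to `r`. -/
def IsMultipartitionOf (d r : ℕ) (lam : Fin d → List ℕ) : Prop :=
  (∀ a, IsPartitionList (lam a)) ∧ (∑ a, (lam a).sum) = r

/-- The `m`-charged height `hc_λ := max_a (h_{λ^{(a)}} - m^{(a)})` of a `d`-partition `λ`
with respect to the weight system `m`. -/
def chargedHeight {d : ℕ} [NeZero d] (m : Fin d → ℤ) (lam : Fin d → List ℕ) : ℤ :=
  Finset.univ.sup' Finset.univ_nonempty fun a => ((lam a).length : ℤ) - m a

/-- The `m`-charged content of a `d`-partition `λ`: the multiset union of the entries of the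
rows `Bc_λ^{(a)} = β_{λ^{(a)}}[hc_λ - hc_λ^{(a)}]` of the `m`-charged standard symbol. -/
def chargedContent {d : ℕ} [NeZero d] (m : Fin d → ℤ) (lam : Fin d → List ℕ) : Multiset ℕ :=
  ∑ a : Fin d,
    (↑(shiftedBeta (betaNumber (lam a))
        ((chargedHeight m lam - (((lam a).length : ℤ) - m a)).toNat)) : Multiset ℕ)

/-!
The shift amounts in the charged standard symbol are chosen so that row `a` has exactly
`hc + m⁽ᵃ⁾` entries. Hence the charged content has `d * hc + ∑ₐ m⁽ᵃ⁾` entries, and since `d ≠ 0`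
its cardinality alone determines the charged height `hc`.
-/

theorem length_betaNumber (l : List ℕ) : (betaNumber l).length = l.length :=
  List.length_mapIdx

theorem length_shiftedBeta (β : List ℕ) (k : ℕ) : (shiftedBeta β k).length = β.length + k := by
  simp [shiftedBeta]

section Charged

variable {d : ℕ} [NeZero d] (m : Fin d → ℤ) (lam : Fin d → List ℕ)

theorem length_sub_le_chargedHeight (a : Fin d) :
    ((lam a).length : ℤ) - m a ≤ chargedHeight m lam :=
  Finset.le_sup' (fun a => ((lam a).length : ℤ) - m a) (Finset.mem_univ a)

theorem length_chargedSymbol_row (a : Fin d) :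
    ((shiftedBeta (betaNumber (lam a))
        ((chargedHeight m lam - (((lam a).length : ℤ) - m a)).toNat)).length : ℤ) =
      chargedHeight m lam + m a := by
  have shift_nonneg : 0 ≤ chargedHeight m lam - (((lam a).length : ℤ) - m a) :=
    sub_nonneg.mpr (length_sub_le_chargedHeight m lam a)
  rw [length_shiftedBeta, length_betaNumber, Nat.cast_add, Int.toNat_of_nonneg shift_nonneg]
  ring

theorem card_chargedContent :
    ((chargedContent m lam).card : ℤ) = d * chargedHeight m lam + ∑ a, m a := by
  simp only [chargedContent, Multiset.card_sum, Multiset.coe_card, Nat.cast_sum,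
    length_chargedSymbol_row, Finset.sum_add_distrib, Finset.sum_const, Finset.card_univ,
    Fintype.card_fin, nsmul_eq_mul]

end Charged

theorem chargedHeight_eq_of_chargedContent_eq_general {d : ℕ} [NeZero d] (m : Fin d → ℤ)
    (lam mu : Fin d → List ℕ)
    (h : (chargedContent m lam).card = (chargedContent m mu).card) :
    chargedHeight m lam = chargedHeight m mu := by
  have card_eq : d * chargedHeight m lam + ∑ a, m a = d * chargedHeight m mu + ∑ a, m a := by
    rw [← card_chargedContent, ← card_chargedContent, h]
  have d_ne_zero : (d : ℤ) ≠ 0 := Nat.cast_ne_zero.mpr (NeZero.ne d)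
  exact mul_left_cancel₀ d_ne_zero (add_right_cancel card_eq)

/-- Let `d ≥ 1`, let `m ∈ ℤ^d` be a weight system and let `λ, μ` be
`d`-partitions of `r`. If the `m`-charged contents of `λ` and `μ` are equal as multisets,
then the `m`-charged heights of `λ` and `μ` are equal. -/
theorem chargedHeight_eq_of_chargedContent_eq (d r : ℕ) [NeZero d] (m : Fin d → ℤ)
    (lam mu : Fin d → List ℕ)
    (hlam : IsMultipartitionOf d r lam) (hmu : IsMultipartitionOf d r mu)
    (h : chargedContent m lam = chargedContent m mu) :
    chargedHeight m lam = chargedHeight m mu :=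
  chargedHeight_eq_of_chargedContent_eq_general m lam mu (congrArg Multiset.card h)
end
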